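/- arXiv:1805.04795 — 11 statements merged into one kernel-verified Lean document; each statement's English description precedes it below -/
import Mathlib

section
/- Let E be a real topological vector space with topology τ and a solid cone C, and let e be an interior point of C. Then the set of interior points of C with respect to the topology generated by the norm ‖·‖_e coincides with the set of interior points of C with respect to τ. -/
open Filter Topology

/-- The Minkowski functional (gauge) of the order interval `[-e, e]`
determined by the cone `C`. -/
noncomputable def coneNorm {E : Type*} [AddCommGroup E] [Module ℝ E]
    (C : Set E) (e x : E) : ℝ :=
  gauge {z : E | z + e ∈ C ∧ e - z ∈ C} x

/-- The set of interior points of `C` with respect to the topology generated by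
the norm `coneNorm C e`: points around which a whole `coneNorm`-ball lies in `C`. -/
def normInterior {E : Type*} [AddCommGroup E] [Module ℝ E]
    (C : Set E) (e : E) : Set E :=
  {x : E | ∃ ε : ℝ, 0 < ε ∧ ∀ y : E, coneNorm C e (y - x) < ε → y ∈ C}

theorem stmt_5 {E : Type*} [AddCommGroup E] [Module ℝ E] [TopologicalSpace E]
    [IsTopologicalAddGroup E] [ContinuousSMul ℝ E]
    (C : Set E) (hC_closed : IsClosed C) (hC_ne : C ≠ {0})
    (hC_add : ∀ x ∈ C, ∀ y ∈ C, x + y ∈ C)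
    (hC_smul : ∀ r : ℝ, 0 ≤ r → ∀ x ∈ C, r • x ∈ C)
    (hC_pointed : C ∩ (-C) = {0})
    (e : E) (he : e ∈ interior C) :
    normInterior C e = interior C := by
  have heC : e ∈ C := interior_subset he
  have h0C : (0 : E) ∈ C := by
    have := hC_smul 0 le_rfl e heC
    simpa using this
  ext x
  constructor
  · rintro ⟨ε, hε, h⟩
    have hmem : x - (ε / 2) • e ∈ C := by
      apply h
      have : coneNorm C e (x - (ε / 2) • e - x) ≤ ε / 2 := by
        unfold coneNorm
        apply gauge_le_of_mem (by positivity)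
        refine ⟨-e, ⟨by simpa using h0C, ?_⟩, ?_⟩
        · simpa using hC_add e heC e heC
        · simp
      linarith
    have hc : Continuous fun y : E => (ε / 2)⁻¹ • (y - (x - (ε / 2) • e)) := by fun_prop
    rw [mem_interior]
    refine ⟨(fun y : E => (ε / 2)⁻¹ • (y - (x - (ε / 2) • e))) ⁻¹' interior C, ?_,
      isOpen_interior.preimage hc, ?_⟩
    · intro y hy
      have h1 := hC_smul (ε / 2) (by positivity) _ (interior_subset hy)
      have h2 := hC_add _ h1 _ hmem
      rw [smul_inv_smul₀ (by positivity)] at h2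
      simpa using h2
    · have : (ε / 2)⁻¹ • (x - (x - (ε / 2) • e)) = e := by
        rw [sub_sub_cancel, inv_smul_smul₀ (by positivity)]
      simpa only [Set.mem_preimage, this] using he
  · intro hx
    have hc : Continuous fun t : ℝ => x - t • e := by fun_prop
    have hev : ∀ᶠ t in 𝓝 (0 : ℝ), x - t • e ∈ interior C :=
      hc.continuousAt.eventually_mem (isOpen_interior.mem_nhds (by simpa using hx))
    obtain ⟨δ, hδ, hδb⟩ := Metric.eventually_nhds_iff.1 hev
    have hd : x - (δ / 2) • e ∈ C := by
      apply interior_subset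
      apply hδb
      rw [Real.dist_eq, sub_zero, abs_of_pos (by positivity)]
      linarith
    refine ⟨δ / 2, by positivity, fun y hy => ?_⟩
    have hs : {z : E | z + e ∈ C ∧ e - z ∈ C} ∈ 𝓝 (0 : E) := by
      have c1 : Continuous fun z : E => z + e := by fun_prop
      have c2 : Continuous fun z : E => e - z := by fun_prop
      have e1 : ∀ᶠ z in 𝓝 (0 : E), z + e ∈ interior C :=
        c1.continuousAt.eventually_mem (isOpen_interior.mem_nhds (by simpa using he))
      have e2 : ∀ᶠ z in 𝓝 (0 : E), e - z ∈ interior C :=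
        c2.continuousAt.eventually_mem (isOpen_interior.mem_nhds (by simpa using he))
      filter_upwards [e1, e2] with z h1 h2
      exact ⟨interior_subset h1, interior_subset h2⟩
    obtain ⟨b, hb, hbd, z, hz, hzy⟩ := exists_lt_of_gauge_lt (absorbent_nhds_zero hs) hy
    have h1 := hC_smul b hb.le _ hz.1
    have h2 := hC_smul (δ / 2 - b) (by linarith) e heC
    have h3 := hC_add _ (hC_add _ hd _ h2) _ h1
    have h4 : b • z = y - x := hzy
    have : y = x - (δ / 2) • e + (δ / 2 - b) • e + b • (z + e) := by
      rw [smul_add, h4, sub_smul]; abel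
    rw [this]; exact h3
end

section
/- Let (E, ‖·‖) be a real normed space with a solid cone C that is normal with normal constant K (i.e., 0 ⪯ x ⪯ y implies ‖x‖ ≤ K‖y‖). Let {xₙ} be a sequence with xₙ ∈ C for all n, and suppose that for every c ∈ int C there exists n₀ such that c − xₙ ∈ int C for all n ≥ n₀. Then xₙ → 0 in norm. -/
open Filter Topology

theorem stmt_7 {E : Type*} [NormedAddCommGroup E] [NormedSpace ℝ E]
    (C : Set E) (hC_closed : IsClosed C) (hC_ne : C ≠ {0})
    (hC_add : ∀ x ∈ C, ∀ y ∈ C, x + y ∈ C)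
    (hC_smul : ∀ r : ℝ, 0 ≤ r → ∀ x ∈ C, r • x ∈ C)
    (hC_pointed : C ∩ (-C) = {0})
    (hSolid : (interior C).Nonempty)
    (K : ℝ) (hK : ∀ x y : E, x ∈ C → y - x ∈ C → ‖x‖ ≤ K * ‖y‖)
    (x : ℕ → E) (hx : ∀ n, x n ∈ C)
    (hcseq : ∀ c ∈ interior C, ∃ n₀ : ℕ, ∀ n ≥ n₀, c - x n ∈ interior C) :
    Tendsto x atTop (𝓝 0) := by
  obtain ⟨c, hc⟩ := hSolid
  rw [Metric.tendsto_atTop]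
  intro ε hε
  have hD : 0 < |K| * ‖c‖ + 1 := by positivity
  have hr : 0 < ε / (|K| * ‖c‖ + 1) := by positivity
  have hrD : ε / (|K| * ‖c‖ + 1) * (|K| * ‖c‖ + 1) = ε := div_mul_cancel₀ _ hD.ne'
  generalize ε / (|K| * ‖c‖ + 1) = r at hr hrD
  have hrc : r • c ∈ interior C := by
    rw [mem_interior] at hc ⊢
    obtain ⟨t, htC, hto, hct⟩ := hc
    refine ⟨(fun y => r • y) '' t, ?_, isOpenMap_smul₀ hr.ne' t hto, ⟨c, hct, rfl⟩⟩
    rintro _ ⟨y, hy, rfl⟩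
    exact hC_smul r hr.le y (htC hy)
  obtain ⟨N, hN⟩ := hcseq _ hrc
  refine ⟨N, fun n hn => ?_⟩
  have h1 := hK (x n) (r • c) (hx n) (interior_subset (hN n hn))
  rw [norm_smul, Real.norm_of_nonneg hr.le] at h1
  have h2 : K * (r * ‖c‖) ≤ |K| * (r * ‖c‖) :=
    mul_le_mul_of_nonneg_right (le_abs_self K) (by positivity)
  rw [dist_zero_right]
  nlinarith
end

section
/- Let (E, τ) be a real topological vector space ordered by a cone C that is solid and normal (i.e., there is a base of neighbourhoods of 0 consisting of order-convex sets). Then E is normable; more precisely, for any interior point e of C, the topology τ coincides with the topology generated by the norm ‖·‖_e, the Minkowski functional of [−e,e]. -/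
open Filter Topology

theorem stmt_9 {E : Type*} [AddCommGroup E] [Module ℝ E] [TopologicalSpace E]
    [IsTopologicalAddGroup E] [ContinuousSMul ℝ E]
    (C : Set E) (hC_closed : IsClosed C) (hC_ne : C ≠ {0})
    (hC_add : ∀ x ∈ C, ∀ y ∈ C, x + y ∈ C)
    (hC_smul : ∀ r : ℝ, 0 ≤ r → ∀ x ∈ C, r • x ∈ C)
    (hC_pointed : C ∩ (-C) = {0})
    (hSolid : (interior C).Nonempty)
    -- normality: a base of neighbourhoods of 0 consisting of order-convex sets
    (hNormal : ∀ U ∈ 𝓝 (0 : E), ∃ V ∈ 𝓝 (0 : E), V ⊆ U ∧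
      ∀ x ∈ V, ∀ y ∈ V, ∀ z : E, z - x ∈ C → y - z ∈ C → z ∈ V) :
    ∀ e ∈ interior C, ∀ s : Set E,
      IsOpen s ↔ ∀ x ∈ s, ∃ ε : ℝ, 0 < ε ∧ {y : E | coneNorm C e (y - x) < ε} ⊆ s := by
  intro e he s
  have heC : e ∈ C := interior_subset he
  have hCe : C ∈ 𝓝 e := mem_interior_iff_mem_nhds.mp he
  set B : Set E := {z : E | z + e ∈ C ∧ e - z ∈ C} with hB
  have hB0 : B ∈ 𝓝 (0 : E) := by
    have h1 : Tendsto (fun z : E => z + e) (𝓝 0) (𝓝 e) := by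
      have : Continuous (fun z : E => z + e) := by fun_prop
      simpa using this.tendsto 0
    have h2 : Tendsto (fun z : E => e - z) (𝓝 0) (𝓝 e) := by
      have : Continuous (fun z : E => e - z) := by fun_prop
      simpa using this.tendsto 0
    exact Filter.inter_mem (h1 hCe) (h2 hCe)
  have hcn : ∀ x, coneNorm C e x = gauge B x := fun x => rfl
  simp only [hcn]
  constructor
  · intro hs x hx
    have hU : {u : E | x + u ∈ s} ∈ 𝓝 (0 : E) := by
      have : Continuous (fun u : E => x + u) := by fun_prop
      exact (hs.preimage this).mem_nhds (by simpa using hx)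
    obtain ⟨V, hV, hVU, hconv⟩ := hNormal _ hU
    have h1 : ∀ᶠ t : ℝ in 𝓝 0, t • e ∈ V ∧ (-t) • e ∈ V := by
      have c1 : Continuous (fun t : ℝ => t • e) := by fun_prop
      have c2 : Continuous (fun t : ℝ => (-t) • e) := by fun_prop
      have t1 := c1.tendsto 0
      have t2 := c2.tendsto 0
      simp only [neg_zero, zero_smul] at t1 t2
      exact (t1.eventually_mem hV).and (t2.eventually_mem hV)
    obtain ⟨δ, ⟨hδ1, hδ2⟩, hδ⟩ :=
      ((h1.filter_mono nhdsWithin_le_nhds).and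
        (self_mem_nhdsWithin : Set.Ioi (0 : ℝ) ∈ 𝓝[>] (0 : ℝ))).exists
    have hδ : 0 < δ := hδ
    refine ⟨δ, hδ, ?_⟩
    intro y hy
    obtain ⟨b, hb0, hbδ, hyb⟩ := exists_lt_of_gauge_lt (absorbent_nhds_zero hB0) hy
    obtain ⟨z, ⟨hz1, hz2⟩, hz⟩ := Set.mem_smul_set.mp hyb
    have hr : (δ - b) • e ∈ C := hC_smul _ (by linarith) _ heC
    have hm : y - x ∈ V := by
      refine hconv _ hδ2 _ hδ1 _ ?_ ?_
      · have := hC_add _ (hC_smul b hb0.le _ hz1) _ hr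
        rw [← hz]
        convert this using 1
        module
      · have := hC_add _ (hC_smul b hb0.le _ hz2) _ hr
        rw [← hz]
        convert this using 1
        module
    simpa using hVU hm
  · intro h
    rw [isOpen_iff_mem_nhds]
    intro x hx
    obtain ⟨ε, hε, hsub⟩ := h x hx
    refine Filter.mem_of_superset ?_ hsub
    have hc : Continuous (fun y : E => (ε / 2)⁻¹ • (y - x)) := by fun_prop
    have ht := hc.tendsto x
    simp only [sub_self, smul_zero] at ht
    refine Filter.mem_of_superset (ht hB0) ?_
    intro y hy
    have h2 : (0 : ℝ) < ε / 2 := by linarith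
    have := gauge_le_of_mem h2.le ((Set.mem_smul_set_iff_inv_smul_mem₀ h2.ne' B (y - x)).mpr hy)
    show gauge B (y - x) < ε
    linarith
end

section
/- Let X be a nonempty set, E a real topological vector space with a solid cone C, and d : X × X → E a cone metric, i.e.: d(x,y) ∈ C for all x, y; d(x,y) = 0 iff x = y; d(x,y) = d(y,x); and d(x,y) + d(y,z) − d(x,z) ∈ C for all x, y, z ∈ X. Then for any interior point e of C, the function D(x,y) = ‖d(x,y)‖_e, where ‖·‖_e is the Minkowski functional of [−e,e], is a metric on X. -/
open Filter Topology

theorem stmt_11 {X : Type*} [Nonempty X]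
    {E : Type*} [AddCommGroup E] [Module ℝ E] [TopologicalSpace E]
    [IsTopologicalAddGroup E] [ContinuousSMul ℝ E]
    (C : Set E) (hC_closed : IsClosed C) (hC_ne : C ≠ {0})
    (hC_add : ∀ x ∈ C, ∀ y ∈ C, x + y ∈ C)
    (hC_smul : ∀ r : ℝ, 0 ≤ r → ∀ x ∈ C, r • x ∈ C)
    (hC_pointed : C ∩ (-C) = {0})
    (hSolid : (interior C).Nonempty)
    (d : X → X → E)
    (hd_pos : ∀ x y : X, d x y ∈ C)
    (hd_eq : ∀ x y : X, d x y = 0 ↔ x = y)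
    (hd_symm : ∀ x y : X, d x y = d y x)
    (hd_tri : ∀ x y z : X, d x y + d y z - d x z ∈ C)
    (e : E) (he : e ∈ interior C) :
    (∀ x y : X, 0 ≤ coneNorm C e (d x y)) ∧
    (∀ x y : X, coneNorm C e (d x y) = 0 ↔ x = y) ∧
    (∀ x y : X, coneNorm C e (d x y) = coneNorm C e (d y x)) ∧
    (∀ x y z : X, coneNorm C e (d x z) ≤ coneNorm C e (d x y) + coneNorm C e (d y z)) := by
  have hnhds : {z : E | z + e ∈ C ∧ e - z ∈ C} ∈ 𝓝 (0 : E) := by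
    have hCe : C ∈ 𝓝 e := mem_interior_iff_mem_nhds.1 he
    have h1 : Tendsto (fun z : E => z + e) (𝓝 0) (𝓝 e) := by
      have : Continuous (fun z : E => z + e) := by fun_prop
      simpa using this.tendsto 0
    have h2 : Tendsto (fun z : E => e - z) (𝓝 0) (𝓝 e) := by
      have : Continuous (fun z : E => e - z) := by fun_prop
      simpa using this.tendsto 0
    exact Filter.inter_mem (h1 hCe) (h2 hCe)
  have habs : Absorbent ℝ {z : E | z + e ∈ C ∧ e - z ∈ C} := absorbent_nhds_zero hnhds
  have heC : e ∈ C := interior_subset he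
  have hA : ∀ (x : E) (r : ℝ), coneNorm C e x < r → r • e - x ∈ C := by
    intro x r h
    obtain ⟨b, hb0, hbr, z, hz, rfl⟩ := exists_lt_of_gauge_lt habs h
    have h1 := hC_smul b hb0.le _ hz.2
    have h2 := hC_smul (r - b) (by linarith) _ heC
    have h3 := hC_add _ h1 _ h2
    have : b • (e - z) + (r - b) • e = r • e - b • z := by module
    simpa [this] using h3
  have hB : ∀ (x : E) (r : ℝ), x ∈ C → 0 < r → r • e - x ∈ C → coneNorm C e x ≤ r := by
    intro x r hx hr h
    refine gauge_le_of_mem hr.le ⟨r⁻¹ • x, ⟨?_, ?_⟩, ?_⟩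
    · exact hC_add _ (hC_smul _ (by positivity) _ hx) _ heC
    · have := hC_smul r⁻¹ (by positivity) _ h
      rwa [smul_sub, inv_smul_smul₀ hr.ne'] at this
    · exact smul_inv_smul₀ hr.ne' x
  have hnn : ∀ x : E, 0 ≤ coneNorm C e x := fun x => gauge_nonneg x
  refine ⟨fun x y => hnn _, fun x y => ⟨fun h => ?_, fun h => ?_⟩,
    fun x y => by rw [hd_symm], fun x y z => ?_⟩
  · rw [← hd_eq]
    have hlim : Tendsto (fun r : ℝ => r • e - d x y) (𝓝[>] 0) (𝓝 (-(d x y))) := by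
      have : Continuous (fun r : ℝ => r • e - d x y) := by fun_prop
      have h0 := this.tendsto 0
      simp only [zero_smul, zero_sub] at h0
      exact h0.mono_left nhdsWithin_le_nhds
    have hneg : -(d x y) ∈ C := by
      refine hC_closed.mem_of_tendsto hlim ?_
      filter_upwards [self_mem_nhdsWithin] with r hr
      exact hA _ _ (by rw [h]; exact hr)
    have : d x y ∈ C ∩ (-C) := ⟨hd_pos x y, hneg⟩
    rw [hC_pointed] at this
    exact this
  · rw [(hd_eq x y).2 h]
    exact gauge_zero
  · refine le_of_forall_pos_le_add fun ε hε => ?_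
    have h1 := hA (d x y) (coneNorm C e (d x y) + ε / 2) (by linarith)
    have h2 := hA (d y z) (coneNorm C e (d y z) + ε / 2) (by linarith)
    have h3 := hC_add _ (hC_add _ h1 _ h2) _ (hd_tri x y z)
    refine hB _ _ (hd_pos x z) (by linarith [hnn (d x y), hnn (d y z)]) ?_
    convert h3 using 1
    module
end

section
/- Let X be a nonempty set, E a real topological vector space with a solid cone C, d : X × X → E a cone metric, e an interior point of C, and D(x,y) = ‖d(x,y)‖_e. Then a sequence {xₙ} in X converges to x ∈ X in (X,d) (meaning: for each c ∈ int C there is n₀ with c − d(xₙ,x) ∈ int C for all n ≥ n₀) if and only if D(xₙ,x) → 0; and {xₙ} is Cauchy in (X,d) (meaning: for each c ∈ int C there is n₀ with c − d(xₘ,xₙ) ∈ int C for all m,n ≥ n₀) if and only if {xₙ} is a Cauchy sequence in the metric space (X,D). -/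
open Filter Topology

/-- Convergence of a sequence in a cone metric space: for each `c` in the interior
of the cone, eventually `d (x n) l ≪ c`. -/
def ConeConv {X E : Type*} [AddCommGroup E] [TopologicalSpace E]
    (C : Set E) (d : X → X → E) (x : ℕ → X) (l : X) : Prop :=
  ∀ c ∈ interior C, ∃ n₀ : ℕ, ∀ n ≥ n₀, c - d (x n) l ∈ interior C

/-- Cauchyness of a sequence in a cone metric space: for each `c` in the interior
of the cone, eventually `d (x m) (x n) ≪ c`. -/
def ConeCauchy {X E : Type*} [AddCommGroup E] [TopologicalSpace E]
    (C : Set E) (d : X → X → E) (x : ℕ → X) : Prop :=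
  ∀ c ∈ interior C, ∃ n₀ : ℕ, ∀ m ≥ n₀, ∀ n ≥ n₀, c - d (x m) (x n) ∈ interior C

theorem cone_aux_add {E : Type*} [AddCommGroup E] [TopologicalSpace E]
    [IsTopologicalAddGroup E] (C : Set E)
    (hC_add : ∀ x ∈ C, ∀ y ∈ C, x + y ∈ C) {a b : E} (ha : a ∈ interior C) (hb : b ∈ C) :
    a + b ∈ interior C := by
  rw [mem_interior_iff_mem_nhds] at ha ⊢
  have h : Tendsto (fun z : E => z - b) (𝓝 (a + b)) (𝓝 a) := by
    have : ContinuousAt (fun z : E => z - b) (a + b) := by fun_prop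
    simpa [ContinuousAt] using this
  filter_upwards [h ha] with z hz
  have := hC_add _ hz _ hb
  simpa using this

theorem cone_aux_smul {E : Type*} [AddCommGroup E] [Module ℝ E] [TopologicalSpace E]
    [ContinuousSMul ℝ E] (C : Set E)
    (hC_smul : ∀ r : ℝ, 0 ≤ r → ∀ x ∈ C, r • x ∈ C) {r : ℝ} (hr : 0 < r) {a : E}
    (ha : a ∈ interior C) : r • a ∈ interior C := by
  rw [mem_interior_iff_mem_nhds] at ha ⊢
  have h : Tendsto (fun z : E => r⁻¹ • z) (𝓝 (r • a)) (𝓝 a) := by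
    have : ContinuousAt (fun z : E => r⁻¹ • z) (r • a) := by fun_prop
    simpa [ContinuousAt, smul_smul, hr.ne'] using this
  filter_upwards [h ha] with z hz
  have := hC_smul r hr.le _ hz
  simpa [smul_smul, hr.ne'] using this

theorem cone_aux1 {E : Type*} [AddCommGroup E] [Module ℝ E] [TopologicalSpace E]
    [IsTopologicalAddGroup E] [ContinuousSMul ℝ E] (C : Set E)
    (hC_add : ∀ x ∈ C, ∀ y ∈ C, x + y ∈ C)
    (hC_smul : ∀ r : ℝ, 0 ≤ r → ∀ x ∈ C, r • x ∈ C)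
    (e : E) (he : e ∈ interior C) (ε : ℝ) (hε : 0 < ε) :
    ∃ c ∈ interior C, ∀ u ∈ C, c - u ∈ interior C → coneNorm C e u < ε := by
  have h2 : 0 < ε / 2 := by positivity
  refine ⟨(ε / 2) • e, cone_aux_smul C hC_smul h2 he, fun u hu h => ?_⟩
  have : coneNorm C e u ≤ ε / 2 := by
    refine gauge_le_of_mem h2.le ?_
    refine ⟨(ε / 2)⁻¹ • u, ⟨hC_add _ (hC_smul _ (by positivity) _ hu) _ (interior_subset he), ?_⟩, ?_⟩
    · have := hC_smul (ε / 2)⁻¹ (by positivity) _ (interior_subset h)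
      rwa [smul_sub, smul_smul, inv_mul_cancel₀ h2.ne', one_smul] at this
    · simp only [smul_smul, mul_inv_cancel₀ h2.ne', one_smul]
  linarith

theorem cone_aux2 {E : Type*} [AddCommGroup E] [Module ℝ E] [TopologicalSpace E]
    [IsTopologicalAddGroup E] [ContinuousSMul ℝ E] (C : Set E)
    (hC_add : ∀ x ∈ C, ∀ y ∈ C, x + y ∈ C)
    (hC_smul : ∀ r : ℝ, 0 ≤ r → ∀ x ∈ C, r • x ∈ C)
    (e : E) (he : e ∈ interior C) (c : E) (hc : c ∈ interior C) :
    ∃ ε : ℝ, 0 < ε ∧ ∀ u, coneNorm C e u < ε → c - u ∈ interior C := by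
  have h : Tendsto (fun t : ℝ => c - t • e) (𝓝[>] 0) (𝓝 c) := by
    have : ContinuousAt (fun t : ℝ => c - t • e) 0 := by fun_prop
    have h3 : Tendsto (fun t : ℝ => c - t • e) (𝓝 0) (𝓝 c) := by
      simpa [ContinuousAt] using this
    exact h3.mono_left nhdsWithin_le_nhds
  obtain ⟨ε, h1, hε⟩ :=
    ((h.eventually (isOpen_interior.mem_nhds hc)).and self_mem_nhdsWithin).exists
  refine ⟨ε, hε, fun u hu => ?_⟩
  have hab : Absorbent ℝ {z : E | z + e ∈ C ∧ e - z ∈ C} := by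
    apply absorbent_nhds_zero
    have hC := mem_interior_iff_mem_nhds.1 he
    have ha : Tendsto (fun z : E => z + e) (𝓝 0) (𝓝 e) := by
      have : ContinuousAt (fun z : E => z + e) 0 := by fun_prop
      simpa [ContinuousAt] using this
    have hb : Tendsto (fun z : E => e - z) (𝓝 0) (𝓝 e) := by
      have : ContinuousAt (fun z : E => e - z) 0 := by fun_prop
      simpa [ContinuousAt] using this
    exact (ha.eventually hC).and (hb.eventually hC)
  obtain ⟨b, hb0, hb, z, hz, rfl⟩ := exists_lt_of_gauge_lt hab hu
  have h4 := hC_add _ (hC_smul b hb0.le _ hz.2) _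
    (hC_smul (ε - b) (by linarith) _ (interior_subset he))
  have h5 := cone_aux_add C hC_add h1 h4
  convert h5 using 1
  module

theorem stmt_12 {X : Type*} [Nonempty X]
    {E : Type*} [AddCommGroup E] [Module ℝ E] [TopologicalSpace E]
    [IsTopologicalAddGroup E] [ContinuousSMul ℝ E]
    (C : Set E) (hC_closed : IsClosed C) (hC_ne : C ≠ {0})
    (hC_add : ∀ x ∈ C, ∀ y ∈ C, x + y ∈ C)
    (hC_smul : ∀ r : ℝ, 0 ≤ r → ∀ x ∈ C, r • x ∈ C)
    (hC_pointed : C ∩ (-C) = {0})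
    (hSolid : (interior C).Nonempty)
    (d : X → X → E)
    (hd_pos : ∀ x y : X, d x y ∈ C)
    (hd_eq : ∀ x y : X, d x y = 0 ↔ x = y)
    (hd_symm : ∀ x y : X, d x y = d y x)
    (hd_tri : ∀ x y z : X, d x y + d y z - d x z ∈ C)
    (e : E) (he : e ∈ interior C) :
    (∀ (x : ℕ → X) (l : X), ConeConv C d x l ↔
      Tendsto (fun n => coneNorm C e (d (x n) l)) atTop (𝓝 0)) ∧
    (∀ x : ℕ → X, ConeCauchy C d x ↔
      ∀ ε : ℝ, 0 < ε → ∃ n₀ : ℕ, ∀ m ≥ n₀, ∀ n ≥ n₀,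
        coneNorm C e (d (x m) (x n)) < ε) := by
  have A := cone_aux1 C hC_add hC_smul e he
  have B := cone_aux2 C hC_add hC_smul e he
  refine ⟨fun x l => ⟨fun h => ?_, fun h c hc => ?_⟩, fun x => ⟨fun h ε hε => ?_, fun h c hc => ?_⟩⟩
  · rw [Metric.tendsto_atTop]
    intro ε hε
    obtain ⟨c, hc, hA⟩ := A ε hε
    obtain ⟨N, hN⟩ := h c hc
    refine ⟨N, fun n hn => ?_⟩
    have h0 : 0 ≤ coneNorm C e (d (x n) l) := gauge_nonneg _
    rw [Real.dist_eq, sub_zero, abs_of_nonneg h0]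
    exact hA _ (hd_pos _ _) (hN n hn)
  · obtain ⟨ε, hε, hB⟩ := B c hc
    obtain ⟨N, hN⟩ := eventually_atTop.1 (h.eventually_lt_const hε)
    exact ⟨N, fun n hn => hB _ (hN n hn)⟩
  · obtain ⟨c, hc, hA⟩ := A ε hε
    obtain ⟨N, hN⟩ := h c hc
    exact ⟨N, fun m hm n hn => hA _ (hd_pos _ _) (hN m hm n hn)⟩
  · obtain ⟨ε, hε, hB⟩ := B c hc
    obtain ⟨N, hN⟩ := h ε hε
    exact ⟨N, fun m hm n hn => hB _ (hN m hm n hn)⟩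
end

section
/- Let (X,d) be a cone metric space over a real normed space (E,‖·‖) ordered by a solid cone C that is monotone (0 ⪯ x ⪯ y implies ‖x‖ ≤ ‖y‖). Then (X,d) is complete if and only if for every sequence of nonempty closed balls Bₙ = B[xₙ, cₙ] = {y ∈ X | d(y,xₙ) ⪯ cₙ} with Bₙ₊₁ ⊆ Bₙ for all n and cₙ → 0 in norm, there exists x ∈ X such that ⋂ₙ Bₙ = {x}. -/
open Filter Topology

open scoped Pointwise in
theorem smul_int_aux {E : Type*} [NormedAddCommGroup E] [NormedSpace ℝ E]
    (C : Set E) (hC_smul : ∀ r : ℝ, 0 ≤ r → ∀ x ∈ C, r • x ∈ C) (e : E) (he : e ∈ interior C)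
    (r : ℝ) (hr : 0 < r) : r • e ∈ interior C := by
  have h1 : r • interior C ⊆ interior C := by
    rw [← interior_smul₀ hr.ne']
    apply interior_mono
    rintro _ ⟨y, hy, rfl⟩
    exact hC_smul r hr.le y hy
  exact h1 (Set.smul_mem_smul_set he)

theorem stmt_13 {X : Type*} [Nonempty X]
    {E : Type*} [NormedAddCommGroup E] [NormedSpace ℝ E]
    (C : Set E) (hC_closed : IsClosed C) (hC_ne : C ≠ {0})
    (hC_add : ∀ x ∈ C, ∀ y ∈ C, x + y ∈ C)
    (hC_smul : ∀ r : ℝ, 0 ≤ r → ∀ x ∈ C, r • x ∈ C)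
    (hC_pointed : C ∩ (-C) = {0})
    (hSolid : (interior C).Nonempty)
    (hMono : ∀ x y : E, x ∈ C → y - x ∈ C → ‖x‖ ≤ ‖y‖)
    (d : X → X → E)
    (hd_pos : ∀ x y : X, d x y ∈ C)
    (hd_eq : ∀ x y : X, d x y = 0 ↔ x = y)
    (hd_symm : ∀ x y : X, d x y = d y x)
    (hd_tri : ∀ x y z : X, d x y + d y z - d x z ∈ C) :
    -- `(X, d)` is complete
    (∀ x : ℕ → X, ConeCauchy C d x → ∃ l : X, ConeConv C d x l) ↔
    -- iff every decreasing sequence of nonempty closed balls with radii tending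
    -- to zero has intersection equal to a singleton
    (∀ (x : ℕ → X) (c : ℕ → E),
      (∀ n, c n ∈ C ∧ c n ≠ 0) →
      (∀ n, Set.Nonempty {y : X | c n - d y (x n) ∈ C}) →
      (∀ n, {y : X | c (n + 1) - d y (x (n + 1)) ∈ C} ⊆ {y : X | c n - d y (x n) ∈ C}) →
      Tendsto c atTop (𝓝 0) →
      ∃ z : X, (⋂ n, {y : X | c n - d y (x n) ∈ C}) = {z}) := by
  have h0C : (0:E) ∈ C := by
    have : (0:E) ∈ C ∩ (-C) := by rw [hC_pointed]; rfl
    exact this.1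
  have hself : ∀ y, d y y = 0 := fun y => (hd_eq y y).2 rfl
  obtain ⟨e, he⟩ := hSolid
  have hsm : ∀ r : ℝ, 0 < r → r • e ∈ interior C := by
    intro r hr
    exact smul_int_aux C hC_smul e he r hr
  have hsmall : ∀ c ∈ interior C, ∃ δ > 0, ∀ v : E, ‖v‖ < δ → c - v ∈ interior C := by
    intro c hc
    obtain ⟨δ, hδ, h⟩ := Metric.isOpen_iff.1 isOpen_interior c hc
    refine ⟨δ, hδ, fun v hv => h ?_⟩
    simpa [Metric.mem_ball, dist_eq_norm] using hv
  have hbig : ∀ ε > 0, ∃ c ∈ interior C, ‖c‖ < ε := by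
    intro ε hε
    have hp : 0 < ‖e‖ + 1 := by positivity
    refine ⟨(ε / (‖e‖ + 1)) • e, hsm _ (by positivity), ?_⟩
    rw [norm_smul, Real.norm_of_nonneg (by positivity), div_mul_eq_mul_div, div_lt_iff₀ hp]
    nlinarith
  have he0 : e ≠ 0 := by
    rintro rfl
    obtain ⟨δ, hδ, h⟩ := hsmall 0 he
    apply hC_ne
    rw [← hC_pointed]
    ext v
    refine ⟨fun hv => ⟨hv, ?_⟩, fun hv => hv.1⟩
    have hp : 0 < ‖v‖ + 1 := by positivity
    have h1 := interior_subset (h ((δ / (‖v‖ + 1)) • v) (by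
      rw [norm_smul, Real.norm_of_nonneg (by positivity), div_mul_eq_mul_div, div_lt_iff₀ hp]
      nlinarith))
    have h2 := hC_smul ((‖v‖ + 1) / δ) (by positivity) _ h1
    have h3 : ((‖v‖ + 1) / δ) • (0 - (δ / (‖v‖ + 1)) • v) = -v := by
      rw [zero_sub, smul_neg, smul_smul]
      have : (‖v‖ + 1) / δ * (δ / (‖v‖ + 1)) = 1 := by field_simp
      rw [this, one_smul]
    rw [h3] at h2
    exact h2
  constructor
  · intro hcomp x c hc _ hnest hlim
    have hanti : Antitone (fun n => {y : X | c n - d y (x n) ∈ C}) := antitone_nat_of_succ_le hnest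
    have hcen : ∀ n m, n ≤ m → c n - d (x m) (x n) ∈ C := by
      intro n m hnm
      apply hanti hnm
      simpa [hself] using (hc m).1
    have hn0 : Tendsto (fun n => ‖c n‖) atTop (𝓝 0) := by simpa using hlim.norm
    have hcau : ConeCauchy C d x := by
      intro a ha
      obtain ⟨δ, hδ, h⟩ := hsmall a ha
      obtain ⟨N, hN⟩ := eventually_atTop.1 (hn0.eventually_lt_const hδ)
      refine ⟨N, fun m hm n hn => h _ ?_⟩
      rcases le_total n m with hnm | hnm
      · exact (hMono _ _ (hd_pos _ _) (hcen n m hnm)).trans_lt (hN n hn)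
      · rw [hd_symm]
        exact (hMono _ _ (hd_pos _ _) (hcen m n hnm)).trans_lt (hN m hm)
    obtain ⟨l, hl⟩ := hcomp x hcau
    have hl0 : Tendsto (fun n => d (x n) l) atTop (𝓝 0) := by
      rw [Metric.tendsto_atTop]
      intro ε hε
      obtain ⟨a, ha, hae⟩ := hbig ε hε
      obtain ⟨N, hN⟩ := hl a ha
      refine ⟨N, fun n hn => ?_⟩
      rw [dist_zero_right]
      exact (hMono _ _ (hd_pos _ _) (interior_subset (hN n hn))).trans_lt hae
    refine ⟨l, ?_⟩
    ext y
    simp only [Set.mem_iInter, Set.mem_ofPred_eq, Set.mem_singleton_iff]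
    constructor
    · intro hy
      rw [← hd_eq, ← norm_eq_zero]
      have hb : ∀ n, ‖d y l‖ ≤ ‖c n + d (x n) l‖ := by
        intro n
        apply hMono _ _ (hd_pos _ _)
        convert hC_add _ (hd_tri y (x n) l) _ (hy n) using 1
        abel
      have ht : Tendsto (fun n => ‖c n + d (x n) l‖) atTop (𝓝 0) := by
        simpa using (hlim.add hl0).norm
      exact le_antisymm (ge_of_tendsto' ht hb) (norm_nonneg _)
    · rintro rfl n
      have ht : Tendsto (fun m => c n - d y (x n) + d (x m) y) atTop (𝓝 (c n - d y (x n))) := by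
        simpa using hl0.const_add (c n - d y (x n))
      refine hC_closed.mem_of_tendsto ht ?_
      filter_upwards [eventually_ge_atTop n] with m hm
      convert hC_add _ (hd_tri y (x m) (x n)) _ (hcen n m hm) using 1
      rw [hd_symm y (x m)]
      abel
  · intro hball x hx
    obtain ⟨φ, hφ, hP⟩ := extraction_forall_of_eventually'
      (P := fun n k => ∀ m ≥ k, ∀ j ≥ k, ((1/2:ℝ)^(n+1)) • e - d (x m) (x j) ∈ C) (by
        intro n
        obtain ⟨N, hN⟩ := hx _ (hsm ((1/2:ℝ)^(n+1)) (by positivity))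
        exact ⟨N, fun k hk m hm j hj =>
          interior_subset (hN m (hk.trans hm) j (hk.trans hj))⟩)
    have hpow : Tendsto (fun n : ℕ => (1/2:ℝ)^n) atTop (𝓝 0) :=
      tendsto_pow_atTop_nhds_zero_of_lt_one (by norm_num) (by norm_num)
    have hlim : Tendsto (fun n : ℕ => ((1/2:ℝ)^n) • e) atTop (𝓝 0) := by
      simpa using hpow.smul_const e
    obtain ⟨z, hz⟩ := hball (fun n => x (φ n)) (fun n => ((1/2:ℝ)^n) • e)
      (fun n => ⟨interior_subset (hsm _ (by positivity)), smul_ne_zero (by positivity) he0⟩)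
      (fun n => ⟨x (φ n), by
        simpa [hself] using interior_subset (hsm ((1/2:ℝ)^n) (by positivity))⟩)
      (by
        intro n y hy
        simp only [Set.mem_ofPred_eq] at hy ⊢
        have h1 := hP n (φ (n+1)) (hφ.monotone (Nat.le_succ n)) (φ n) le_rfl
        convert hC_add _ (hC_add _ h1 _ hy) _ (hd_tri y (x (φ (n+1))) (x (φ n))) using 1
        rw [pow_succ]
        module)
      hlim
    have hzm : ∀ n, ((1/2:ℝ)^n) • e - d z (x (φ n)) ∈ C := by
      have : z ∈ (⋂ n, {y : X | ((1/2:ℝ)^n) • e - d y (x (φ n)) ∈ C}) := by rw [hz]; rfl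
      simpa only [Set.mem_iInter, Set.mem_ofPred_eq] using this
    refine ⟨z, fun a ha => ?_⟩
    obtain ⟨δ, hδ, h⟩ := hsmall a ha
    have ht : Tendsto (fun n : ℕ => ‖((1/2:ℝ)^(n+1)) • e + ((1/2:ℝ)^n) • e‖) atTop (𝓝 0) := by
      simpa using (((tendsto_add_atTop_iff_nat 1).2 hlim).add hlim).norm
    obtain ⟨n, hn⟩ := (ht.eventually_lt_const hδ).exists
    refine ⟨φ n, fun m hm => h _ (lt_of_le_of_lt (hMono _ _ (hd_pos _ _) ?_) hn)⟩
    convert hC_add _ (hC_add _ (hP n m hm (φ n) le_rfl) _ (hzm n)) _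
      (hd_tri (x m) (x (φ n)) z) using 1
    rw [hd_symm z]
    abel
end

section
/- Let (X,d) be a cone metric space over a real topological vector space E with a solid cone C, and let f, g : X → X satisfy f(X) ⊆ g(X), with g(X) (or f(X)) complete as a subspace of (X,d). Suppose there exists λ ∈ (0,1) such that d(fx,fy) ⪯ λ·d(gx,gy) for all x, y ∈ X. Then f and g have a unique point of coincidence; moreover, if f and g are weakly compatible, then they have a unique common fixed point in X. -/
open Filter Topology

/-- A subset `S` of a cone metric space is complete if every Cauchy sequence with
values in `S` converges to a point of `S`. -/
def ConeSubsetComplete {X E : Type*} [AddCommGroup E] [TopologicalSpace E]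
    (C : Set E) (d : X → X → E) (S : Set X) : Prop :=
  ∀ x : ℕ → X, (∀ n, x n ∈ S) → ConeCauchy C d x → ∃ l ∈ S, ConeConv C d x l

theorem stmt_14 {X : Type*} [Nonempty X]
    {E : Type*} [AddCommGroup E] [Module ℝ E] [TopologicalSpace E]
    [IsTopologicalAddGroup E] [ContinuousSMul ℝ E]
    (C : Set E) (hC_closed : IsClosed C) (hC_ne : C ≠ {0})
    (hC_add : ∀ x ∈ C, ∀ y ∈ C, x + y ∈ C)
    (hC_smul : ∀ r : ℝ, 0 ≤ r → ∀ x ∈ C, r • x ∈ C)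
    (hC_pointed : C ∩ (-C) = {0})
    (hSolid : (interior C).Nonempty)
    (d : X → X → E)
    (hd_pos : ∀ x y : X, d x y ∈ C)
    (hd_eq : ∀ x y : X, d x y = 0 ↔ x = y)
    (hd_symm : ∀ x y : X, d x y = d y x)
    (hd_tri : ∀ x y z : X, d x y + d y z - d x z ∈ C)
    (f g : X → X) (hfg : Set.range f ⊆ Set.range g)
    (hcomplete : ConeSubsetComplete C d (Set.range g) ∨
      ConeSubsetComplete C d (Set.range f))
    (lam : ℝ) (hlam₀ : 0 < lam) (hlam₁ : lam < 1)
    (hcontr : ∀ x y : X, lam • d (g x) (g y) - d (f x) (f y) ∈ C) :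
    (∃! w : X, ∃ x : X, f x = w ∧ g x = w) ∧
    ((∀ x : X, f x = g x → f (g x) = g (f x)) →
      ∃! z : X, f z = z ∧ g z = z) := by
  have hanti : ∀ v ∈ C, -v ∈ C → v = 0 := by
    intro v hv hv'
    have : v ∈ C ∩ (-C) := ⟨hv, hv'⟩
    rw [hC_pointed] at this
    exact this
  have hint_add : ∀ c ∈ interior C, ∀ v ∈ C, c + v ∈ interior C := by
    intro c hc v hv
    have ho : IsOpen ((fun z => z - v) ⁻¹' interior C) :=
      isOpen_interior.preimage (by fun_prop)
    refine interior_maximal ?_ ho (by simpa using hc)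
    intro z hz
    have := hC_add _ (interior_subset hz) v hv
    simpa using this
  have hint_smul : ∀ r : ℝ, 0 < r → ∀ c ∈ interior C, r • c ∈ interior C := by
    intro r hr c hc
    have ho : IsOpen ((fun z : E => r⁻¹ • z) ⁻¹' interior C) :=
      isOpen_interior.preimage (by fun_prop)
    refine interior_maximal ?_ ho (by simpa [smul_smul, hr.ne'] using hc)
    intro z hz
    have := hC_smul r hr.le _ (interior_subset hz)
    simpa [smul_smul, hr.ne'] using this
  have hsmall : ∀ v ∈ C, (∀ c ∈ interior C, c + c - v ∈ C) → v = 0 := by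
    intro v hv h
    obtain ⟨c, hc⟩ := hSolid
    refine hanti v hv ?_
    have ht : Tendsto (fun r : ℝ => r • c + r • c - v) (𝓝[>] 0) (𝓝 (-v)) := by
      have : Continuous (fun r : ℝ => r • c + r • c - v) := by fun_prop
      have h2 := this.tendsto 0
      simp only [zero_smul, zero_add, zero_sub] at h2
      exact h2.mono_left nhdsWithin_le_nhds
    refine hC_closed.mem_of_tendsto ht ?_
    filter_upwards [self_mem_nhdsWithin] with r hr
    exact h _ (hint_smul r hr c hc)
  have huniq : ∀ x x' : X, f x = g x → f x' = g x' → f x = f x' := by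
    intro x x' hx hx'
    have h := hcontr x x'
    rw [← hx, ← hx'] at h
    rw [← hd_eq]
    refine hanti _ (hd_pos _ _) ?_
    have h1 : 0 < 1 - lam := by linarith
    have h2 := hC_smul (1 - lam)⁻¹ (by positivity) _ h
    have h3 : lam • d (f x) (f x') - d (f x) (f x') = (1 - lam) • (- d (f x) (f x')) := by
      module
    rw [h3, smul_smul, inv_mul_cancel₀ h1.ne', one_smul] at h2
    exact h2
  have hex : ∃ x, f x = g x := by
    have hch : ∀ x, ∃ x', g x' = f x := fun x => hfg ⟨x, rfl⟩
    choose h hh using hch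
    obtain ⟨x0⟩ := ‹Nonempty X›
    let x : ℕ → X := fun n => h^[n] x0
    have hx : ∀ n, g (x (n+1)) = f (x n) := by
      intro n
      simp only [x, Function.iterate_succ_apply', hh]
    have hstep : ∀ m n, lam • d (f (x m)) (f (x n)) - d (f (x (m+1))) (f (x (n+1))) ∈ C := by
      intro m n
      have := hcontr (x (m+1)) (x (n+1))
      rwa [hx, hx] at this
    have h1 : 0 < 1 - lam := by linarith
    obtain ⟨b, hb⟩ : ∃ b, d (f (x 0)) (f (x 1)) = (1 - lam) • b :=
      ⟨(1 - lam)⁻¹ • d (f (x 0)) (f (x 1)), by rw [smul_smul, mul_inv_cancel₀ h1.ne', one_smul]⟩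
    have hbC : b ∈ C := by
      have := hC_smul (1 - lam)⁻¹ (by positivity) _ (hd_pos (f (x 0)) (f (x 1)))
      rwa [hb, smul_smul, inv_mul_cancel₀ h1.ne', one_smul] at this
    have h0 : ∀ k, b - d (f (x 0)) (f (x k)) ∈ C := by
      intro k
      induction k with
      | zero => rw [(hd_eq _ _).2 rfl, sub_zero]; exact hbC
      | succ k ih =>
        have e1 := hd_tri (f (x 0)) (f (x 1)) (f (x (k+1)))
        have e2 := hstep 0 k
        have e3 := hC_smul lam hlam₀.le _ ih
        have e4 := hC_add _ (hC_add _ e1 _ e2) _ e3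
        rw [hb] at e4
        convert e4 using 1
        module
    have hn : ∀ n k, lam ^ n • b - d (f (x n)) (f (x (n+k))) ∈ C := by
      intro n k
      induction n with
      | zero => simpa using h0 k
      | succ n ih =>
        have e3 := hC_smul lam hlam₀.le _ ih
        have e4 := hC_add _ e3 _ (hstep n (n+k))
        rw [show n + 1 + k = n + k + 1 by ring]
        convert e4 using 1
        module
    have hcau : ConeCauchy C d (fun n => f (x n)) := by
      intro c hc
      have ht : Tendsto (fun n : ℕ => c - lam ^ n • b) atTop (𝓝 c) := by
        have := ((tendsto_pow_atTop_nhds_zero_of_lt_one hlam₀.le hlam₁).smul_const b).const_sub c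
        simpa using this
      obtain ⟨n₀, hn₀⟩ := eventually_atTop.1 (ht (isOpen_interior.mem_nhds hc))
      have key : ∀ m ≥ n₀, ∀ k, c - d (f (x m)) (f (x (m+k))) ∈ interior C := by
        intro m hm k
        have := hint_add _ (hn₀ m hm) _ (hn m k)
        simpa using this
      refine ⟨n₀, fun m hm n hn => ?_⟩
      rcases le_total m n with hmn | hmn
      · obtain ⟨k, rfl⟩ := Nat.exists_eq_add_of_le hmn
        exact key m hm k
      · obtain ⟨k, rfl⟩ := Nat.exists_eq_add_of_le hmn
        simp only
        rw [hd_symm]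
        exact key n hn k
    obtain ⟨l, ⟨u, rfl⟩, hl⟩ : ∃ l ∈ Set.range g, ConeConv C d (fun n => f (x n)) l := by
      rcases hcomplete with H | H
      · exact H _ (fun n => hfg ⟨_, rfl⟩) hcau
      · obtain ⟨l, hl, hl'⟩ := H _ (fun n => ⟨_, rfl⟩) hcau
        exact ⟨l, hfg hl, hl'⟩
    refine ⟨u, ?_⟩
    rw [← hd_eq]
    refine hsmall _ (hd_pos _ _) ?_
    intro c hc
    obtain ⟨n, hn'⟩ := hl c hc
    have a1 := interior_subset (hn' n le_rfl)
    have a2 := interior_subset (hn' (n+1) (by omega))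
    have a3 := hcontr u (x (n+1))
    rw [hx, hd_symm (g u)] at a3
    have a4 := hd_tri (f u) (f (x (n+1))) (g u)
    have a5 := hC_smul (1 - lam) h1.le _ (hd_pos (f (x n)) (g u))
    have a6 := hC_add _ (hC_add _ (hC_add _ (hC_add _ a1 _ a2) _ a3) _ a4) _ a5
    convert a6 using 1
    module
  obtain ⟨x, hx⟩ := hex
  refine ⟨⟨f x, ⟨x, rfl, hx.symm⟩, ?_⟩, ?_⟩
  · rintro w ⟨x', h1, h2⟩
    rw [← h1]
    exact huniq _ _ (h1.trans h2.symm) hx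
  · intro hwc
    have e := hwc x hx
    have e1 : f (f x) = g (f x) := by rw [← e, ← hx]
    have e2 : f (f x) = f x := huniq _ _ e1 hx
    refine ⟨f x, ⟨e2, e1.symm.trans e2⟩, ?_⟩
    rintro z ⟨h1, h2⟩
    have := huniq z x (h1.trans h2.symm) hx
    rwa [h1] at this
end

section
/- Let (X,d) be a cone metric space over a real topological vector space E with a solid cone C, and let f, g : X → X satisfy f(X) ⊆ g(X), with g(X) (or f(X)) complete as a subspace of (X,d). Suppose there exist nonnegative constants λ, μ, ν, ξ, π with λ + μ + ν + ξ + π < 1 such that d(fx,fy) ⪯ λ·d(gx,gy) + μ·d(gx,fx) + ν·d(gy,fy) + ξ·d(gx,fy) + π·d(gy,fx) for all x, y ∈ X (Hardy–Rogers condition). Then f and g have a unique point of coincidence; moreover, if f and g are weakly compatible, then they have a unique common fixed point in X. -/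
open Filter Topology

theorem real_aux {X : Type*} [Nonempty X] [MetricSpace X]
    (f g : X → X) (hfg : Set.range f ⊆ Set.range g)
    (hcomp : ∀ x : ℕ → X, (∀ n, x n ∈ Set.range f) → CauchySeq x →
      ∃ l ∈ Set.range g, Tendsto x atTop (𝓝 l))
    (lam mu nu xi pi : ℝ)
    (hlam : 0 ≤ lam) (hmu : 0 ≤ mu) (hnu : 0 ≤ nu) (hxi : 0 ≤ xi) (hpi : 0 ≤ pi)
    (hsum : lam + mu + nu + xi + pi < 1)
    (hcontr : ∀ x y : X, dist (f x) (f y) ≤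
      lam * dist (g x) (g y) + mu * dist (g x) (f x) + nu * dist (g y) (f y) +
        xi * dist (g x) (f y) + pi * dist (g y) (f x)) :
    (∃! w : X, ∃ x : X, f x = w ∧ g x = w) ∧
    ((∀ x : X, f x = g x → f (g x) = g (f x)) →
      ∃! z : X, f z = z ∧ g z = z) := by
  have huniq : ∀ u v, f u = g u → f v = g v → f u = f v := by
    intro u v hu hv
    have h := hcontr u v
    rw [← hu, ← hv, dist_self, dist_self, dist_comm (f v) (f u)] at h
    have h0 : 0 ≤ dist (f u) (f v) := dist_nonneg
    apply dist_le_zero.1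
    nlinarith
  have hex : ∃ u, f u = g u := by
    have hch : ∀ x, ∃ y, g y = f x := fun x => hfg ⟨x, rfl⟩
    choose s hs using hch
    obtain ⟨x0⟩ := ‹Nonempty X›
    let x : ℕ → X := fun n => s^[n] x0
    have hx : ∀ n, g (x (n+1)) = f (x n) := by
      intro n
      simp only [x, Function.iterate_succ_apply']
      exact hs _
    let q : ℝ := (lam + (mu+nu)/2 + (xi+pi)/2) / (1 - (mu+nu)/2 - (xi+pi)/2)
    have hden : 0 < 1 - (mu+nu)/2 - (xi+pi)/2 := by linarith
    have hq0 : 0 ≤ q := div_nonneg (by linarith) hden.le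
    have hq1 : q < 1 := by
      rw [div_lt_one hden]; linarith
    have hstep : ∀ n, dist (f (x (n+1))) (f (x (n+2))) ≤ q * dist (f (x n)) (f (x (n+1))) := by
      intro n
      have h1 := hcontr (x (n+1)) (x (n+2))
      have h2 := hcontr (x (n+2)) (x (n+1))
      rw [hx n, hx (n+1), dist_self] at h1 h2
      rw [dist_comm (f (x (n+2))) (f (x (n+1))), dist_comm (f (x (n+1))) (f (x n))] at h2
      have ht := dist_triangle (f (x n)) (f (x (n+1))) (f (x (n+2)))
      have h3 := mul_le_mul_of_nonneg_left ht (add_nonneg hxi hpi)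
      rw [div_mul_eq_mul_div, le_div_iff₀ hden]
      linarith
    have hgeo : ∀ n, dist (f (x n)) (f (x (n+1))) ≤ dist (f (x 0)) (f (x 1)) * q ^ n := by
      intro n
      induction n with
      | zero => simp
      | succ k ih =>
        calc _ ≤ _ := hstep k
          _ ≤ q * (dist (f (x 0)) (f (x 1)) * q ^ k) := mul_le_mul_of_nonneg_left ih hq0
          _ = _ := by ring
    have hcau : CauchySeq (fun n => f (x n)) := cauchySeq_of_le_geometric q _ hq1 hgeo
    obtain ⟨l, ⟨u, rfl⟩, hl⟩ := hcomp _ (fun n => ⟨_, rfl⟩) hcau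
    have hl1 : Tendsto (fun n => f (x (n+1))) atTop (𝓝 (g u)) := hl.comp (tendsto_add_atTop_nat 1)
    have hlim := le_of_tendsto_of_tendsto'
      (hl1.dist (tendsto_const_nhds (x := f u)))
      ((((((hl.dist (tendsto_const_nhds (x := g u))).const_mul lam).add
        ((hl.dist hl1).const_mul mu)).add
        ((tendsto_const_nhds (x := dist (g u) (f u))).const_mul nu)).add
        ((hl.dist (tendsto_const_nhds (x := f u))).const_mul xi)).add
        (((tendsto_const_nhds (x := g u)).dist hl1).const_mul pi))
      (fun n => by
        have := hcontr (x (n+1)) u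
        rw [hx n] at this
        exact this)
    refine ⟨u, ?_⟩
    rw [dist_self] at hlim
    have h0 : 0 ≤ dist (g u) (f u) := dist_nonneg
    symm
    apply dist_le_zero.1
    nlinarith
  obtain ⟨u, hu⟩ := hex
  refine ⟨⟨f u, ⟨u, rfl, hu.symm⟩, ?_⟩, ?_⟩
  · rintro w ⟨v, rfl, hv⟩
    exact huniq v u hv.symm hu
  · intro hw
    have h1 : f (f u) = g (f u) := by
      have := hw u hu
      rwa [← hu] at this
    have h2 := huniq _ _ h1 hu
    refine ⟨f u, ⟨h2, h1 ▸ h2⟩, ?_⟩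
    rintro z ⟨hz1, hz2⟩
    have := huniq z u (hz1.trans hz2.symm) hu
    rwa [hz1] at this

theorem stmt_15 {X : Type*} [Nonempty X]
    {E : Type*} [AddCommGroup E] [Module ℝ E] [TopologicalSpace E]
    [IsTopologicalAddGroup E] [ContinuousSMul ℝ E]
    (C : Set E) (hC_closed : IsClosed C) (hC_ne : C ≠ {0})
    (hC_add : ∀ x ∈ C, ∀ y ∈ C, x + y ∈ C)
    (hC_smul : ∀ r : ℝ, 0 ≤ r → ∀ x ∈ C, r • x ∈ C)
    (hC_pointed : C ∩ (-C) = {0})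
    (hSolid : (interior C).Nonempty)
    (d : X → X → E)
    (hd_pos : ∀ x y : X, d x y ∈ C)
    (hd_eq : ∀ x y : X, d x y = 0 ↔ x = y)
    (hd_symm : ∀ x y : X, d x y = d y x)
    (hd_tri : ∀ x y z : X, d x y + d y z - d x z ∈ C)
    (f g : X → X) (hfg : Set.range f ⊆ Set.range g)
    (hcomplete : ConeSubsetComplete C d (Set.range g) ∨
      ConeSubsetComplete C d (Set.range f))
    (lam mu nu xi pi : ℝ)
    (hlam : 0 ≤ lam) (hmu : 0 ≤ mu) (hnu : 0 ≤ nu) (hxi : 0 ≤ xi) (hpi : 0 ≤ pi)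
    (hsum : lam + mu + nu + xi + pi < 1)
    (hcontr : ∀ x y : X,
      lam • d (g x) (g y) + mu • d (g x) (f x) + nu • d (g y) (f y) +
        xi • d (g x) (f y) + pi • d (g y) (f x) - d (f x) (f y) ∈ C) :
    (∃! w : X, ∃ x : X, f x = w ∧ g x = w) ∧
    ((∀ x : X, f x = g x → f (g x) = g (f x)) →
      ∃! z : X, f z = z ∧ g z = z) := by
  obtain ⟨e, he⟩ := hSolid
  have hzero : (0:E) ∈ C := by
    have := hC_smul 0 le_rfl e (interior_subset he)
    rwa [zero_smul] at this
  have heC : e ∈ C := interior_subset he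
  -- small perturbations of interior points
  have hpert : ∀ c ∈ interior C, ∀ v : E, ∃ t : ℝ, 0 < t ∧ c - t • v ∈ interior C := by
    intro c hc v
    have hcont : Tendsto (fun t : ℝ => c - t • v) (𝓝[>] 0) (𝓝 c) := by
      have : Continuous (fun t : ℝ => c - t • v) := by fun_prop
      have h := this.tendsto 0
      simp only [zero_smul, sub_zero] at h
      exact h.mono_left nhdsWithin_le_nhds
    have h1 := hcont.eventually (isOpen_interior.mem_nhds hc)
    obtain ⟨t, ht1, ht2⟩ := (h1.and self_mem_nhdsWithin).exists
    exact ⟨t, ht2, ht1⟩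
  have hintadd : ∀ a ∈ interior C, ∀ b ∈ C, a + b ∈ interior C := by
    intro a ha b hb
    have hopen : IsOpen ((fun z => z - b) ⁻¹' interior C) :=
      isOpen_interior.preimage (by fun_prop)
    refine interior_maximal ?_ hopen (show a + b - b ∈ interior C by simpa using ha)
    intro z hz
    have := hC_add _ (interior_subset hz) b hb
    simpa using this
  have hintsmul : ∀ r : ℝ, 0 < r → r • e ∈ interior C := by
    intro r hr
    have hopen : IsOpen ((fun z : E => r⁻¹ • z) ⁻¹' interior C) :=
      isOpen_interior.preimage (by fun_prop)
    refine interior_maximal ?_ hopen (show r⁻¹ • r • e ∈ interior C by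
      rw [smul_smul, inv_mul_cancel₀ hr.ne', one_smul]; exact he)
    intro z hz
    have := hC_smul r hr.le _ (interior_subset hz)
    rwa [smul_smul, mul_inv_cancel₀ hr.ne', one_smul] at this
  let S : E → Set ℝ := fun v => {r : ℝ | 0 ≤ r ∧ r • e - v ∈ C}
  let p : E → ℝ := fun v => sInf (S v)
  have hSne : ∀ v, (S v).Nonempty := by
    intro v
    obtain ⟨t, ht, h⟩ := hpert e he v
    refine ⟨t⁻¹, inv_nonneg.2 ht.le, ?_⟩
    have := hC_smul t⁻¹ (inv_nonneg.2 ht.le) _ (interior_subset h)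
    rwa [smul_sub, smul_smul, inv_mul_cancel₀ ht.ne', one_smul] at this
  have hSbdd : ∀ v, BddBelow (S v) := fun v => ⟨0, fun r hr => hr.1⟩
  have hSclosed : ∀ v, IsClosed (S v) := by
    intro v
    exact (isClosed_Ici (a := (0:ℝ))).inter
      (hC_closed.preimage (f := fun r : ℝ => r • e - v) (by fun_prop))
  have hpmem : ∀ v, 0 ≤ p v ∧ p v • e - v ∈ C := fun v =>
    (hSclosed v).csInf_mem (hSne v) (hSbdd v)
  have hple : ∀ v r, 0 ≤ r → r • e - v ∈ C → p v ≤ r := fun v r h0 h =>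
    csInf_le (hSbdd v) ⟨h0, h⟩
  have hmono : ∀ r s : ℝ, r ≤ s → ∀ v, r • e - v ∈ C → s • e - v ∈ C := by
    intro r s hrs v h
    have := hC_add _ h _ (hC_smul (s - r) (sub_nonneg.2 hrs) e heC)
    convert this using 1
    module
  have hp0 : p 0 = 0 := le_antisymm (hple 0 0 le_rfl (by simpa using hzero)) (hpmem 0).1
  let M : MetricSpace X :=
    { dist := fun x y => p (d x y)
      dist_self := fun x => by
        show p (d x x) = 0
        rw [(hd_eq x x).2 rfl, hp0]
      dist_comm := fun x y => by
        show p (d x y) = p (d y x)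
        rw [hd_symm]
      dist_triangle := fun x y z => by
        show p (d x z) ≤ p (d x y) + p (d y z)
        refine hple _ _ (add_nonneg (hpmem _).1 (hpmem _).1) ?_
        have := hC_add _ (hC_add _ (hpmem (d x y)).2 _ (hpmem (d y z)).2) _ (hd_tri x y z)
        convert this using 1
        module
      eq_of_dist_eq_zero := fun {x y} h => by
        have h' : p (d x y) = 0 := h
        have h1 := (hpmem (d x y)).2
        rw [h', zero_smul, zero_sub] at h1
        have h2 : d x y ∈ C ∩ (-C) := ⟨hd_pos x y, h1⟩
        rw [hC_pointed] at h2
        exact (hd_eq x y).1 h2 }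
  have hdist : ∀ x y : X, dist x y = p (d x y) := fun x y => rfl
  have hcau : ∀ x : ℕ → X, CauchySeq x → ConeCauchy C d x := by
    intro x hx c hc
    obtain ⟨t, ht, h⟩ := hpert c hc e
    obtain ⟨N, hN⟩ := Metric.cauchySeq_iff.1 hx t ht
    refine ⟨N, fun m hm n hn => ?_⟩
    have h1 := hN m hm n hn
    rw [hdist] at h1
    have h2 := hintadd _ h _ (hmono _ _ h1.le _ (hpmem (d (x m) (x n))).2)
    convert h2 using 1
    abel
  have hconv : ∀ (x : ℕ → X) (l : X), ConeConv C d x l → Tendsto x atTop (𝓝 l) := by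
    intro x l hx
    rw [Metric.tendsto_atTop]
    intro ε hε
    obtain ⟨N, hN⟩ := hx _ (hintsmul (ε/2) (half_pos hε))
    refine ⟨N, fun n hn => ?_⟩
    rw [hdist]
    have := hple _ _ (half_pos hε).le (interior_subset (hN n hn))
    linarith
  refine real_aux f g hfg ?_ lam mu nu xi pi hlam hmu hnu hxi hpi hsum ?_
  · intro x hx hxc
    rcases hcomplete with h | h
    · obtain ⟨l, hl, hl'⟩ := h x (fun n => hfg (hx n)) (hcau x hxc)
      exact ⟨l, hl, hconv x l hl'⟩
    · obtain ⟨l, hl, hl'⟩ := h x hx (hcau x hxc)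
      exact ⟨l, hfg hl, hconv x l hl'⟩
  · intro x y
    simp only [hdist]
    have q1 := hpmem (d (g x) (g y))
    have q2 := hpmem (d (g x) (f x))
    have q3 := hpmem (d (g y) (f y))
    have q4 := hpmem (d (g x) (f y))
    have q5 := hpmem (d (g y) (f x))
    have := q1.1
    have := q2.1
    have := q3.1
    have := q4.1
    have := q5.1
    refine hple _ _ (by positivity) ?_
    have := hC_add _ (hC_add _ (hC_add _ (hC_add _ (hC_add _ (hC_smul _ hlam _ q1.2) _
      (hC_smul _ hmu _ q2.2)) _ (hC_smul _ hnu _ q3.2)) _ (hC_smul _ hxi _ q4.2)) _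
      (hC_smul _ hpi _ q5.2)) _ (hcontr x y)
    convert this using 1
    module
end

section
/- Let (X,d) be a complete cone metric space over a real topological vector space E with a solid cone C, and let f : X → X be a mapping such that there exists λ ∈ (0,1) with the property: for all x, y ∈ X there exists u(x,y) ∈ {d(x,y), d(x,fx), d(y,fy), d(x,fy), d(y,fx)} satisfying d(fx,fy) ⪯ λ·u(x,y). Then f has a unique fixed point in X. -/
open Filter Topology

theorem ciric_aux {X : Type*} [Nonempty X] (D : X → X → ℝ)
    (h0 : ∀ x y, 0 ≤ D x y) (hself : ∀ x, D x x = 0) (heq : ∀ x y, D x y = 0 → x = y)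
    (hsymm : ∀ x y, D x y = D y x) (htri : ∀ x y z, D x z ≤ D x y + D y z)
    (hcomp : ∀ x : ℕ → X, (∀ ε > 0, ∃ N : ℕ, ∀ m ≥ N, ∀ n ≥ N, D (x m) (x n) ≤ ε) →
      ∃ l, ∀ ε > 0, ∃ N : ℕ, ∀ n ≥ N, D (x n) l ≤ ε)
    (f : X → X) (lam : ℝ) (hl0 : 0 < lam) (hl1 : lam < 1)
    (hc : ∀ x y B, D x y ≤ B → D x (f x) ≤ B → D y (f y) ≤ B → D x (f y) ≤ B →
      D y (f x) ≤ B → D (f x) (f y) ≤ lam * B) :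
    ∃! z : X, f z = z := by
  obtain ⟨x0⟩ := ‹Nonempty X›
  set x : ℕ → X := fun n => f^[n] x0 with hx
  have xs : ∀ n, x (n+1) = f (x n) := fun n => Function.iterate_succ_apply' f n x0
  set M := D (x 0) (x 1) / (1 - lam) with hM
  have hM0 : 0 ≤ M := div_nonneg (h0 _ _) (by linarith)
  have hM1 : (1 - lam) * M = D (x 0) (x 1) := by
    rw [hM]; field_simp [show (1 - lam) ≠ 0 by linarith]
  have step : ∀ (a b : ℕ) (B : ℝ), (∀ i j, a ≤ i → i ≤ b → a ≤ j → j ≤ b → D (x i) (x j) ≤ B) →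
      ∀ i j, a + 1 ≤ i → i ≤ b → a + 1 ≤ j → j ≤ b → D (x i) (x j) ≤ lam * B := by
    intro a b B h i j hi hi' hj hj'
    obtain ⟨i, rfl⟩ : ∃ k, i = k + 1 := ⟨i - 1, by omega⟩
    obtain ⟨j, rfl⟩ : ∃ k, j = k + 1 := ⟨j - 1, by omega⟩
    rw [xs, xs]
    apply hc
    all_goals (try simp only [← xs]); apply h <;> omega
  have bdd : ∀ n, ∀ i j, i ≤ n → j ≤ n → D (x i) (x j) ≤ M := by
    intro n
    obtain ⟨⟨p, q⟩, hpq, hmax⟩ := Finset.exists_max_image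
      (Finset.range (n+1) ×ˢ Finset.range (n+1)) (fun p => D (x p.1) (x p.2)) ⟨(0,0), by simp⟩
    simp only [Finset.mem_product, Finset.mem_range, Prod.forall] at hpq hmax
    set B := D (x p) (x q) with hB
    have hB0 : 0 ≤ B := h0 _ _
    have hm : ∀ i j, 0 ≤ i → i ≤ n → 0 ≤ j → j ≤ n → D (x i) (x j) ≤ B := by
      intro i j _ hi _ hj; exact hmax i j ⟨by omega, by omega⟩
    have hs := step 0 n B hm
    have key : ∀ k, k ≤ n → D (x 0) (x k) ≤ (1 - lam) * M + lam * B := by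
      intro k hk
      rcases Nat.eq_zero_or_pos k with rfl | hk0
      · rw [hself]; rw [hM1]; have := h0 (x 0) (x 1); positivity
      · have := htri (x 0) (x 1) (x k)
        have := hs 1 k (by omega) (by omega) (by omega) hk
        linarith
    have hBM : B ≤ M := by
      have h3 : B ≤ (1 - lam) * M + lam * B := by
        rcases Nat.eq_zero_or_pos p with hp | hp
        · have := key q (by omega); rw [hB, hp]; rw [hB, hp] at this; exact this
        rcases Nat.eq_zero_or_pos q with hq | hq
        · have := key p (by omega); rw [hB, hq, hsymm]
          rw [hB, hq, hsymm (x p)] at this; exact this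
        have h4 := hs p q (by omega) (by omega) (by omega) (by omega)
        have : 0 ≤ (1 - lam) * M := mul_nonneg (by linarith) hM0
        linarith
      have : (1 - lam) * B ≤ (1 - lam) * M := by linarith
      exact le_of_mul_le_mul_left this (by linarith)
    intro i j hi hj
    exact (hm i j (by omega) hi (by omega) hj).trans hBM
  have dec : ∀ k, ∀ i j, k ≤ i → k ≤ j → D (x i) (x j) ≤ lam ^ k * M := by
    intro k
    induction k with
    | zero => intro i j _ _; simpa using bdd (max i j) i j (le_max_left _ _) (le_max_right _ _)
    | succ k ih =>
      intro i j hi hj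
      have := step k (max i j) _ (fun i j a _ b _ => ih i j a b) i j hi (le_max_left _ _) hj
        (le_max_right _ _)
      rw [pow_succ]; linarith
  obtain ⟨z, hz⟩ := hcomp x (by
    intro ε hε
    obtain ⟨N, hN⟩ := exists_pow_lt_of_lt_one (show 0 < ε / (M + 1) by positivity) hl1
    refine ⟨N, fun m hm n hn => (dec N m n hm hn).trans ?_⟩
    rw [lt_div_iff₀ (by positivity)] at hN
    have : 0 ≤ lam ^ N := by positivity
    nlinarith)
  have hfz : f z = z := by
    have hle : (1 - lam) * D z (f z) ≤ 0 := by
      refine le_of_forall_pos_le_add fun ε hε => ?_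
      obtain ⟨N, hN⟩ := hz (ε / 3) (by positivity)
      have a1 := hN N le_rfl
      have a2 := hN (N+1) (by omega)
      rw [xs] at a2
      have s1 := hsymm z (f (x N))
      have s2 := hsymm z (x N)
      have p := h0 z (f z)
      have c := hc (x N) z (2 * (ε / 3) + D z (f z)) (by linarith)
        (by linarith [htri (x N) z (f (x N))]) (by linarith)
        (by linarith [htri (x N) z (f z)]) (by linarith)
      have t := htri z (f (x N)) (f z)
      nlinarith
    have h1 := h0 z (f z)
    exact (heq _ _ (le_antisymm (by nlinarith) h1)).symm
  refine ⟨z, hfz, ?_⟩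
  · intro w hw
    have hzz : ∀ z', f z' = z' → ∀ w, f w = w → w = z' := by
      intro z' hz' w hw
      have p := h0 w z'
      have := hc w z' (D w z') le_rfl (by rw [hw, hself]; exact p) (by rw [hz', hself]; exact p)
        (by rw [hz']) (by rw [hw, hsymm])
      rw [hw, hz'] at this
      exact heq _ _ (le_antisymm (by nlinarith) p)
    exact hzz z hfz w hw

theorem stmt_16 {X : Type*} [Nonempty X]
    {E : Type*} [AddCommGroup E] [Module ℝ E] [TopologicalSpace E]
    [IsTopologicalAddGroup E] [ContinuousSMul ℝ E]
    (C : Set E) (hC_closed : IsClosed C) (hC_ne : C ≠ {0})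
    (hC_add : ∀ x ∈ C, ∀ y ∈ C, x + y ∈ C)
    (hC_smul : ∀ r : ℝ, 0 ≤ r → ∀ x ∈ C, r • x ∈ C)
    (hC_pointed : C ∩ (-C) = {0})
    (hSolid : (interior C).Nonempty)
    (d : X → X → E)
    (hd_pos : ∀ x y : X, d x y ∈ C)
    (hd_eq : ∀ x y : X, d x y = 0 ↔ x = y)
    (hd_symm : ∀ x y : X, d x y = d y x)
    (hd_tri : ∀ x y z : X, d x y + d y z - d x z ∈ C)
    (hcomplete : ∀ x : ℕ → X, ConeCauchy C d x → ∃ l : X, ConeConv C d x l)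
    (f : X → X) (lam : ℝ) (hlam₀ : 0 < lam) (hlam₁ : lam < 1)
    (hcontr : ∀ x y : X,
      ∃ u ∈ ({d x y, d x (f x), d y (f y), d x (f y), d y (f x)} : Set E),
        lam • u - d (f x) (f y) ∈ C) :
    ∃! z : X, f z = z := by
  obtain ⟨e, he⟩ := hSolid
  have heC : e ∈ C := interior_subset he
  have h0C : (0:E) ∈ C := by simpa using hC_smul 0 le_rfl e heC
  have hanti : ∀ v, v ∈ C → -v ∈ C → v = 0 := by
    intro v h1 h2
    have : v ∈ C ∩ (-C) := ⟨h1, by simpa using h2⟩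
    rw [hC_pointed] at this; simpa using this
  -- interior plus cone
  have hint_add : ∀ a ∈ interior C, ∀ b ∈ C, a + b ∈ interior C := by
    intro a ha b hb
    have hopen : IsOpen ((fun v => v + (-b)) ⁻¹' interior C) :=
      isOpen_interior.preimage (by fun_prop)
    refine interior_maximal ?_ hopen (by simpa using ha)
    intro v hv
    have := hC_add _ (interior_subset hv) b hb
    simpa using this
  have hint_smul : ∀ r : ℝ, 0 < r → ∀ a ∈ interior C, r • a ∈ interior C := by
    intro r hr a ha
    have hopen : IsOpen ((fun v : E => r⁻¹ • v) ⁻¹' interior C) :=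
      isOpen_interior.preimage (by fun_prop)
    refine interior_maximal ?_ hopen (by simpa [smul_smul, hr.ne'] using ha)
    intro v hv
    have := hC_smul r hr.le _ (interior_subset hv)
    simpa [smul_smul, hr.ne'] using this
  have hsmall : ∀ a ∈ interior C, ∀ v : E, ∃ ε : ℝ, 0 < ε ∧ a - ε • v ∈ interior C := by
    intro a ha v
    have hcont : Continuous (fun t : ℝ => a - t • v) := by fun_prop
    have hmem : (fun t : ℝ => a - t • v) ⁻¹' interior C ∈ 𝓝 (0:ℝ) :=
      (isOpen_interior.preimage hcont).mem_nhds (by simpa using ha)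
    obtain ⟨ε, hε, hb⟩ := Metric.mem_nhds_iff.1 hmem
    refine ⟨ε / 2, by positivity, hb ?_⟩
    rw [Metric.mem_ball, Real.dist_eq, sub_zero, abs_of_pos (by positivity)]; linarith
  let S : X → X → Set ℝ := fun x y => {r | 0 ≤ r ∧ r • e - d x y ∈ C}
  have hSne : ∀ x y, (S x y).Nonempty := by
    intro x y
    obtain ⟨ε, hε, h⟩ := hsmall e he (d x y)
    refine ⟨ε⁻¹, by positivity, ?_⟩
    have := hC_smul ε⁻¹ (by positivity) _ (interior_subset h)
    simpa [smul_sub, smul_smul, hε.ne'] using this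
  have hSbdd : ∀ x y, BddBelow (S x y) := fun x y => ⟨0, fun r hr => hr.1⟩
  have hScl : ∀ x y, IsClosed (S x y) := by
    intro x y
    have hcont : Continuous (fun t : ℝ => t • e - d x y) := by fun_prop
    exact isClosed_Ici.inter (hC_closed.preimage hcont)
  let D : X → X → ℝ := fun x y => sInf (S x y)
  have hDmem : ∀ x y, D x y ∈ S x y := fun x y => (hScl x y).csInf_mem (hSne x y) (hSbdd x y)
  have hDle : ∀ x y r, 0 ≤ r → r • e - d x y ∈ C → D x y ≤ r :=
    fun x y r h1 h2 => csInf_le (hSbdd x y) ⟨h1, h2⟩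
  have hDup : ∀ x y r, D x y ≤ r → r • e - d x y ∈ C := by
    intro x y r h
    have h1 := hC_add _ (hDmem x y).2 _ (hC_smul (r - D x y) (by linarith) e heC)
    have h2 : D x y • e - d x y + (r - D x y) • e = r • e - d x y := by module
    rwa [h2] at h1
  have hD0 : ∀ x y, 0 ≤ D x y := fun x y => (hDmem x y).1
  have conv : ∀ c ∈ interior C, ∃ ε : ℝ, 0 < ε ∧ ∀ x y, D x y ≤ ε → c - d x y ∈ interior C := by
    intro c hc
    obtain ⟨ε, hε, h⟩ := hsmall c hc e
    refine ⟨ε, hε, fun x y hxy => ?_⟩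
    have h1 := hint_add _ h _ (hDup x y ε hxy)
    have h2 : c - ε • e + (ε • e - d x y) = c - d x y := by module
    rwa [h2] at h1
  refine ciric_aux D hD0 ?_ ?_ ?_ ?_ ?_ f lam hlam₀ hlam₁ ?_
  · intro x
    refine le_antisymm (hDle x x 0 le_rfl ?_) (hD0 x x)
    rw [(hd_eq x x).2 rfl]; simpa using h0C
  · intro x y h
    have := hDup x y 0 h.le
    rw [zero_smul, zero_sub] at this
    exact (hd_eq x y).1 (hanti _ (hd_pos x y) this)
  · intro x y
    simp only [D, S, hd_symm x y]
  · intro x y z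
    refine hDle x z _ (add_nonneg (hD0 x y) (hD0 y z)) ?_
    have h1 := hC_add _ (hC_add _ (hDmem x y).2 _ (hDmem y z).2) _ (hd_tri x y z)
    have h2 : D x y • e - d x y + (D y z • e - d y z) + (d x y + d y z - d x z)
      = (D x y + D y z) • e - d x z := by module
    rwa [h2] at h1
  · intro x hx
    obtain ⟨l, hl⟩ := hcomplete x (by
      intro c hc
      obtain ⟨ε, hε, h⟩ := conv c hc
      obtain ⟨N, hN⟩ := hx ε hε
      exact ⟨N, fun m hm n hn => h _ _ (hN m hm n hn)⟩)
    refine ⟨l, fun ε hε => ?_⟩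
    obtain ⟨N, hN⟩ := hl (ε • e) (hint_smul ε hε e he)
    exact ⟨N, fun n hn => hDle _ _ _ hε.le (interior_subset (hN n hn))⟩
  · intro x y B h1 h2 h3 h4 h5
    have hB : 0 ≤ B := (hD0 x y).trans h1
    refine hDle _ _ _ (by positivity) ?_
    obtain ⟨u, hu, hcu⟩ := hcontr x y
    have hu' : B • e - u ∈ C := by
      simp only [Set.mem_insert_iff, Set.mem_singleton_iff] at hu
      rcases hu with rfl | rfl | rfl | rfl | rfl <;> apply hDup <;> assumption
    have h6 := hC_add _ (hC_smul lam hlam₀.le _ hu') _ hcu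
    have h7 : lam • (B • e - u) + (lam • u - d (f x) (f y)) = (lam * B) • e - d (f x) (f y) := by
      module
    rwa [h7] at h6
end

section
/- Let X be a nonempty set, E a real topological vector space with a solid cone C, s ≥ 1 a real number, and d : X × X → E a cone b-metric with parameter s, i.e.: d(x,y) ∈ C; d(x,y) = 0 iff x = y; d(x,y) = d(y,x); and d(x,z) ⪯ s(d(x,y) + d(y,z)) for all x, y, z ∈ X. Then for any interior point e of C, the function D(x,y) = ‖d(x,y)‖_e is a b-metric on X with the same parameter s; moreover, a sequence is Cauchy (respectively convergent) in (X,d) if and only if it is Cauchy (respectively convergent) in (X,D). -/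
open Filter Topology

theorem stmt_17 {X : Type*} [Nonempty X]
    {E : Type*} [AddCommGroup E] [Module ℝ E] [TopologicalSpace E]
    [IsTopologicalAddGroup E] [ContinuousSMul ℝ E]
    (C : Set E) (hC_closed : IsClosed C) (hC_ne : C ≠ {0})
    (hC_add : ∀ x ∈ C, ∀ y ∈ C, x + y ∈ C)
    (hC_smul : ∀ r : ℝ, 0 ≤ r → ∀ x ∈ C, r • x ∈ C)
    (hC_pointed : C ∩ (-C) = {0})
    (hSolid : (interior C).Nonempty)
    (s : ℝ) (hs : 1 ≤ s)
    (d : X → X → E)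
    (hd_pos : ∀ x y : X, d x y ∈ C)
    (hd_eq : ∀ x y : X, d x y = 0 ↔ x = y)
    (hd_symm : ∀ x y : X, d x y = d y x)
    (hd_tri : ∀ x y z : X, s • (d x y + d y z) - d x z ∈ C)
    (e : E) (he : e ∈ interior C) :
    -- `D = ‖d ·‖_e` is a b-metric on `X` with the same parameter `s`
    ((∀ x y : X, 0 ≤ coneNorm C e (d x y)) ∧
     (∀ x y : X, coneNorm C e (d x y) = 0 ↔ x = y) ∧
     (∀ x y : X, coneNorm C e (d x y) = coneNorm C e (d y x)) ∧
     (∀ x y z : X, coneNorm C e (d x z) ≤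
        s * (coneNorm C e (d x y) + coneNorm C e (d y z)))) ∧
    -- a sequence converges in `(X, d)` iff it converges in `(X, D)`
    (∀ (x : ℕ → X) (l : X), ConeConv C d x l ↔
      Tendsto (fun n => coneNorm C e (d (x n) l)) atTop (𝓝 0)) ∧
    -- a sequence is Cauchy in `(X, d)` iff it is Cauchy in `(X, D)`
    (∀ x : ℕ → X, ConeCauchy C d x ↔
      ∀ ε : ℝ, 0 < ε → ∃ n₀ : ℕ, ∀ m ≥ n₀, ∀ n ≥ n₀,
        coneNorm C e (d (x m) (x n)) < ε) := by
  have h0 : (0:E) ∈ C := by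
    have := hC_smul 0 le_rfl e (interior_subset he)
    simpa using this
  have hNhds : {z : E | z + e ∈ C ∧ e - z ∈ C} ∈ 𝓝 (0:E) := by
    have h1 : Tendsto (fun z : E => z + e) (𝓝 0) (𝓝 e) := by
      have : Continuous (fun z : E => z + e) := by fun_prop
      simpa using this.tendsto 0
    have h2 : Tendsto (fun z : E => e - z) (𝓝 0) (𝓝 e) := by
      have : Continuous (fun z : E => e - z) := by fun_prop
      simpa using this.tendsto 0
    have hC : C ∈ 𝓝 e := mem_interior_iff_mem_nhds.1 he
    filter_upwards [h1 hC, h2 hC] with z hz1 hz2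
    exact ⟨hz1, hz2⟩
  have hAbs : Absorbent ℝ {z : E | z + e ∈ C ∧ e - z ∈ C} := absorbent_nhds_zero hNhds
  have heC : e ∈ C := interior_subset he
  -- upper bound
  have K0 : ∀ r : ℝ, 0 < r → ∀ u ∈ C, r • e - u ∈ C → coneNorm C e u ≤ r := by
    intro r hr u hu h
    refine gauge_le_of_mem hr.le ?_
    rw [Set.mem_smul_set_iff_inv_smul_mem₀ hr.ne']
    refine ⟨hC_add _ (hC_smul _ (inv_nonneg.2 hr.le) _ hu) _ heC, ?_⟩
    have := hC_smul _ (inv_nonneg.2 hr.le) _ h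
    rwa [smul_sub, inv_smul_smul₀ hr.ne'] at this
  have K1 : ∀ r : ℝ, ∀ u : E, coneNorm C e u < r → r • e - u ∈ C := by
    intro r u h
    obtain ⟨b, hb, hbr, hm⟩ := exists_lt_of_gauge_lt hAbs h
    rw [Set.mem_smul_set_iff_inv_smul_mem₀ hb.ne'] at hm
    have h1 := hC_smul b hb.le _ hm.2
    rw [smul_sub, smul_inv_smul₀ hb.ne'] at h1
    have h2 := hC_add _ (hC_smul (r - b) (sub_nonneg.2 hbr.le) _ heC) _ h1
    convert h2 using 1
    module
  have hnn : ∀ u : E, 0 ≤ coneNorm C e u := fun u => gauge_nonneg u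
  have Kz : ∀ u ∈ C, coneNorm C e u = 0 → u = 0 := by
    intro u hu h
    have hlim : Tendsto (fun r : ℝ => r • e - u) (𝓝[>] 0) (𝓝 (-u)) := by
      have : Continuous (fun r : ℝ => r • e - u) := by fun_prop
      have h3 := this.tendsto 0
      simp only [zero_smul, zero_sub] at h3
      exact h3.mono_left nhdsWithin_le_nhds
    have hneg : -u ∈ C := by
      refine hC_closed.mem_of_tendsto hlim ?_
      filter_upwards [self_mem_nhdsWithin] with r hr
      exact K1 r u (by rw [h]; exact hr)
    have : u ∈ C ∩ (-C) := ⟨hu, hneg⟩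
    rw [hC_pointed] at this
    exact this
  have hIntAdd : ∀ a ∈ interior C, ∀ b ∈ C, a + b ∈ interior C := by
    intro a ha b hb
    rw [mem_interior_iff_mem_nhds] at ha ⊢
    have h1 : Tendsto (fun z : E => z - b) (𝓝 (a + b)) (𝓝 a) := by
      have : Continuous (fun z : E => z - b) := by fun_prop
      simpa using this.tendsto (a + b)
    filter_upwards [h1 ha] with z hz
    simpa using hC_add _ hz _ hb
  have hIntSmul : ∀ r : ℝ, 0 < r → r • e ∈ interior C := by
    intro r hr
    have he' := he
    rw [mem_interior_iff_mem_nhds] at he' ⊢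
    have h1 : Tendsto (fun z : E => r⁻¹ • z) (𝓝 (r • e)) (𝓝 e) := by
      have : Continuous (fun z : E => r⁻¹ • z) := by fun_prop
      simpa [inv_smul_smul₀ hr.ne'] using this.tendsto (r • e)
    filter_upwards [h1 he'] with z hz
    simpa [smul_inv_smul₀ hr.ne'] using hC_smul r hr.le _ hz
  have A : ∀ c ∈ interior C, ∃ r : ℝ, 0 < r ∧ ∀ u : E, coneNorm C e u < r →
      c - u ∈ interior C := by
    intro c hc
    have hlim : Tendsto (fun r : ℝ => c - r • e) (𝓝[>] 0) (𝓝 c) := by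
      have : Continuous (fun r : ℝ => c - r • e) := by fun_prop
      have h3 := this.tendsto 0
      simp only [zero_smul, sub_zero] at h3
      exact h3.mono_left nhdsWithin_le_nhds
    obtain ⟨r, hr1, hr2⟩ :=
      ((hlim.eventually (isOpen_interior.mem_nhds hc)).and self_mem_nhdsWithin).exists
    refine ⟨r, hr2, fun u hu => ?_⟩
    have := hIntAdd _ hr1 _ (K1 r u hu)
    simpa using this
  have B : ∀ ε : ℝ, 0 < ε → ∀ u ∈ C, (ε / 2) • e - u ∈ interior C → coneNorm C e u < ε := by
    intro ε hε u hu h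
    have := K0 (ε / 2) (by linarith) u hu (interior_subset h)
    linarith
  refine ⟨⟨fun x y => hnn _, ?_, ?_, ?_⟩, ?_, ?_⟩
  · intro x y
    refine ⟨fun h => (hd_eq x y).1 (Kz _ (hd_pos x y) h), fun h => ?_⟩
    rw [(hd_eq x y).2 h]
    exact gauge_zero
  · intro x y
    rw [hd_symm]
  · intro x y z
    have key : ∀ δ : ℝ, 0 < δ → coneNorm C e (d x z) ≤
        s * ((coneNorm C e (d x y) + δ) + (coneNorm C e (d y z) + δ)) := by
      intro δ hδ
      have h1 := K1 (coneNorm C e (d x y) + δ) (d x y) (by linarith)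
      have h2 := K1 (coneNorm C e (d y z) + δ) (d y z) (by linarith)
      have p1 := hnn (d x y)
      have p2 := hnn (d y z)
      refine K0 _ (by positivity) _ (hd_pos x z) ?_
      have h3 := hC_add _ (hC_smul s (by linarith) _ (hC_add _ h1 _ h2)) _ (hd_tri x y z)
      convert h3 using 1
      module
    refine le_of_forall_pos_le_add fun ε hε => ?_
    have hs0 : 0 < s := by linarith
    have := key (ε / (2 * s)) (by positivity)
    have h4 : s * (ε / (2 * s)) = ε / 2 := by field_simp
    nlinarith
  · intro x l
    rw [Metric.tendsto_atTop]
    simp only [Real.dist_eq, sub_zero, abs_of_nonneg (hnn _)]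
    constructor
    · intro h ε hε
      obtain ⟨N, hN⟩ := h _ (hIntSmul (ε / 2) (by linarith))
      exact ⟨N, fun n hn => B ε hε _ (hd_pos _ _) (hN n hn)⟩
    · intro h c hc
      obtain ⟨r, hr, hu⟩ := A c hc
      obtain ⟨N, hN⟩ := h r hr
      exact ⟨N, fun n hn => hu _ (hN n hn)⟩
  · intro x
    constructor
    · intro h ε hε
      obtain ⟨N, hN⟩ := h _ (hIntSmul (ε / 2) (by linarith))
      exact ⟨N, fun m hm n hn => B ε hε _ (hd_pos _ _) (hN m hm n hn)⟩
    · intro h c hc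
      obtain ⟨r, hr, hu⟩ := A c hc
      obtain ⟨N, hN⟩ := h r hr
      exact ⟨N, fun m hm n hn => hu _ (hN m hm n hn)⟩
end

section
/- Let X be a nonempty set, E a real topological vector space with a solid cone C, and d : X × X → E a cone rectangular metric, i.e.: d(x,y) ∈ C; d(x,y) = 0 iff x = y; d(x,y) = d(y,x); and d(x,y) ⪯ d(x,w) + d(w,z) + d(z,y) for all x, y ∈ X and all distinct points w, z ∈ X ∖ {x,y}. Then for any interior point e of C, the function D(x,y) = ‖d(x,y)‖_e is a rectangular metric on X; moreover, a sequence is Cauchy (respectively convergent) in (X,d) if and only if it is Cauchy (respectively convergent) in (X,D). -/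
open Filter Topology

section aux
variable {E : Type*} [AddCommGroup E] [Module ℝ E]

theorem aux_le (C : Set E) (hadd : ∀ x ∈ C, ∀ y ∈ C, x + y ∈ C)
    (hsmul : ∀ r : ℝ, 0 ≤ r → ∀ x ∈ C, r • x ∈ C) (e : E) (he : e ∈ C)
    (x : E) (hx : x ∈ C) (r : ℝ) (hr : 0 < r) (h : r • e - x ∈ C) : coneNorm C e x ≤ r := by
  unfold coneNorm
  apply gauge_le_of_mem hr.le
  rw [Set.mem_smul_set_iff_inv_smul_mem₀ hr.ne']
  refine ⟨hadd _ (hsmul _ (inv_nonneg.2 hr.le) _ hx) _ he, ?_⟩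
  have := hsmul r⁻¹ (inv_nonneg.2 hr.le) _ h
  rwa [smul_sub, inv_smul_smul₀ hr.ne'] at this

variable [TopologicalSpace E] [IsTopologicalAddGroup E] [ContinuousSMul ℝ E]

theorem aux_small (C : Set E) (c x : E) (hc : c ∈ interior C) :
    ∃ t : ℝ, 0 < t ∧ c - t • x ∈ interior C := by
  have hcont : Continuous (fun t : ℝ => c - t • x) := by fun_prop
  have h0 : ∀ᶠ t in 𝓝 (0:ℝ), c - t • x ∈ interior C := by
    apply hcont.continuousAt.eventually_mem
    apply isOpen_interior.mem_nhds
    simpa using hc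
  have h1 : ∀ᶠ t in 𝓝[>] (0:ℝ), c - t • x ∈ interior C := h0.filter_mono nhdsWithin_le_nhds
  obtain ⟨t, ht, ht'⟩ := (h1.and self_mem_nhdsWithin).exists
  exact ⟨t, ht', ht⟩

theorem aux_lt (C : Set E) (hadd : ∀ x ∈ C, ∀ y ∈ C, x + y ∈ C)
    (hsmul : ∀ r : ℝ, 0 ≤ r → ∀ x ∈ C, r • x ∈ C) (e : E) (he : e ∈ interior C)
    (x : E) (hx : x ∈ C) (r : ℝ) (h : coneNorm C e x < r) : r • e - x ∈ C := by
  unfold coneNorm at h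
  have heC := interior_subset he
  rw [gauge_def] at h
  obtain ⟨b, ⟨hb, hbx⟩, hbr⟩ := (csInf_lt_iff ⟨0, fun b hb => le_of_lt hb.1⟩ (by
    obtain ⟨t, ht, hmem⟩ := aux_small C e x he
    refine ⟨t⁻¹, inv_pos.2 ht, ?_⟩
    rw [Set.mem_smul_set_iff_inv_smul_mem₀ (inv_pos.2 ht).ne', inv_inv]
    exact ⟨hadd _ (hsmul _ ht.le _ hx) _ heC, interior_subset hmem⟩)).1 h
  have hb : 0 < b := hb
  rw [Set.mem_smul_set_iff_inv_smul_mem₀ hb.ne'] at hbx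
  have h1 := hsmul b hb.le _ hbx.2
  rw [smul_sub, smul_inv_smul₀ hb.ne'] at h1
  have h2 := hadd _ h1 _ (hsmul (r - b) (by linarith) _ heC)
  have : b • e - x + (r - b) • e = r • e - x := by module
  rwa [this] at h2

theorem aux_self (C : Set E) (hcl : IsClosed C) (hadd : ∀ x ∈ C, ∀ y ∈ C, x + y ∈ C)
    (hsmul : ∀ r : ℝ, 0 ≤ r → ∀ x ∈ C, r • x ∈ C) (e : E) (he : e ∈ interior C)
    (x : E) (hx : x ∈ C) : coneNorm C e x • e - x ∈ C := by
  have hcont : Continuous (fun t : ℝ => t • e - x) := by fun_prop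
  have ht : Tendsto (fun t : ℝ => t • e - x) (𝓝[>] (coneNorm C e x))
      (𝓝 (coneNorm C e x • e - x)) := hcont.continuousAt.tendsto.mono_left nhdsWithin_le_nhds
  refine hcl.mem_of_tendsto ht ?_
  filter_upwards [self_mem_nhdsWithin] with r hr
  exact aux_lt C hadd hsmul e he x hx r hr

theorem aux_int_add (C : Set E) (hadd : ∀ x ∈ C, ∀ y ∈ C, x + y ∈ C)
    (a b : E) (ha : a ∈ interior C) (hb : b ∈ C) : a + b ∈ interior C := by
  have hsub : (fun z => z + b) '' interior C ⊆ interior C := by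
    apply interior_maximal
    · rintro _ ⟨z, hz, rfl⟩
      exact hadd _ (interior_subset hz) _ hb
    · exact isOpenMap_add_right b _ isOpen_interior
  exact hsub ⟨a, ha, rfl⟩

theorem aux_A (C : Set E) (hadd : ∀ x ∈ C, ∀ y ∈ C, x + y ∈ C)
    (hsmul : ∀ r : ℝ, 0 ≤ r → ∀ x ∈ C, r • x ∈ C) (e : E) (he : e ∈ interior C)
    (ε : ℝ) (hε : 0 < ε) :
    ∃ c ∈ interior C, ∀ x ∈ C, c - x ∈ interior C → coneNorm C e x < ε := by
  have hε2 : 0 < ε / 2 := by linarith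
  refine ⟨(ε / 2) • e, ?_, fun x hx h => ?_⟩
  · have hsub : (fun z => (ε / 2) • z) '' interior C ⊆ interior C := by
      apply interior_maximal
      · rintro _ ⟨z, hz, rfl⟩
        exact hsmul _ hε2.le _ (interior_subset hz)
      · exact isOpenMap_smul₀ hε2.ne' _ isOpen_interior
    exact hsub ⟨e, he, rfl⟩
  · have := aux_le C hadd hsmul e (interior_subset he) x hx _ hε2 (interior_subset h)
    linarith

theorem aux_B (C : Set E) (hadd : ∀ x ∈ C, ∀ y ∈ C, x + y ∈ C)
    (hsmul : ∀ r : ℝ, 0 ≤ r → ∀ x ∈ C, r • x ∈ C) (e : E) (he : e ∈ interior C)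
    (c : E) (hc : c ∈ interior C) :
    ∃ ε : ℝ, 0 < ε ∧ ∀ x ∈ C, coneNorm C e x < ε → c - x ∈ interior C := by
  obtain ⟨t, ht, hmem⟩ := aux_small C c e hc
  refine ⟨t, ht, fun x hx h => ?_⟩
  have := aux_int_add C hadd _ _ hmem (aux_lt C hadd hsmul e he x hx t h)
  simpa using this

end aux

theorem stmt_18 {X : Type*} [Nonempty X]
    {E : Type*} [AddCommGroup E] [Module ℝ E] [TopologicalSpace E]
    [IsTopologicalAddGroup E] [ContinuousSMul ℝ E]
    (C : Set E) (hC_closed : IsClosed C) (hC_ne : C ≠ {0})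
    (hC_add : ∀ x ∈ C, ∀ y ∈ C, x + y ∈ C)
    (hC_smul : ∀ r : ℝ, 0 ≤ r → ∀ x ∈ C, r • x ∈ C)
    (hC_pointed : C ∩ (-C) = {0})
    (hSolid : (interior C).Nonempty)
    (d : X → X → E)
    (hd_pos : ∀ x y : X, d x y ∈ C)
    (hd_eq : ∀ x y : X, d x y = 0 ↔ x = y)
    (hd_symm : ∀ x y : X, d x y = d y x)
    (hd_rect : ∀ x y w z : X, w ≠ z → w ≠ x → w ≠ y → z ≠ x → z ≠ y →
      d x w + d w z + d z y - d x y ∈ C)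
    (e : E) (he : e ∈ interior C) :
    -- `D = ‖d ·‖_e` is a rectangular metric on `X`
    ((∀ x y : X, 0 ≤ coneNorm C e (d x y)) ∧
     (∀ x y : X, coneNorm C e (d x y) = 0 ↔ x = y) ∧
     (∀ x y : X, coneNorm C e (d x y) = coneNorm C e (d y x)) ∧
     (∀ x y w z : X, w ≠ z → w ≠ x → w ≠ y → z ≠ x → z ≠ y →
        coneNorm C e (d x y) ≤
          coneNorm C e (d x w) + coneNorm C e (d w z) + coneNorm C e (d z y))) ∧
    -- a sequence converges in `(X, d)` iff it converges in `(X, D)`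
    (∀ (x : ℕ → X) (l : X), ConeConv C d x l ↔
      Tendsto (fun n => coneNorm C e (d (x n) l)) atTop (𝓝 0)) ∧
    -- a sequence is Cauchy in `(X, d)` iff it is Cauchy in `(X, D)`
    (∀ x : ℕ → X, ConeCauchy C d x ↔
      ∀ ε : ℝ, 0 < ε → ∃ n₀ : ℕ, ∀ m ≥ n₀, ∀ n ≥ n₀,
        coneNorm C e (d (x m) (x n)) < ε) := by
  have hN : ∀ v, 0 ≤ coneNorm C e v := fun v => gauge_nonneg v
  have heC := interior_subset he
  refine ⟨⟨fun x y => hN _, fun x y => ⟨fun h => ?_, fun h => ?_⟩, fun x y => by rw [hd_symm], ?_⟩,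
    fun x l => ⟨fun h => ?_, fun h c hc => ?_⟩, fun x => ⟨fun h ε hε => ?_, fun h c hc => ?_⟩⟩
  · have h1 := aux_self C hC_closed hC_add hC_smul e he _ (hd_pos x y)
    rw [h, zero_smul, zero_sub] at h1
    have h2 : d x y ∈ C ∩ (-C) := ⟨hd_pos x y, h1⟩
    rw [hC_pointed] at h2
    exact (hd_eq x y).1 h2
  · rw [(hd_eq x y).2 h]
    exact gauge_zero
  · intro x y w z h1 h2 h3 h4 h5
    have hs := fun a b => aux_self C hC_closed hC_add hC_smul e he _ (hd_pos a b)
    apply le_of_forall_pos_le_add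
    intro δ hδ
    apply aux_le C hC_add hC_smul e heC _ (hd_pos x y)
    · have := hN (d x w)
      have := hN (d w z)
      have := hN (d z y)
      linarith
    · have := hC_add _ (hC_add _ (hC_add _ (hC_add _ (hs x w) _ (hs w z)) _ (hs z y)) _
        (hd_rect x y w z h1 h2 h3 h4 h5)) _ (hC_smul δ hδ.le _ heC)
      convert this using 1
      module
  · rw [Metric.tendsto_atTop]
    intro ε hε
    obtain ⟨c, hc, hc'⟩ := aux_A C hC_add hC_smul e he ε hε
    obtain ⟨n₀, hn⟩ := h c hc
    refine ⟨n₀, fun n hn' => ?_⟩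
    rw [Real.dist_eq, sub_zero, abs_of_nonneg (hN _)]
    exact hc' _ (hd_pos _ _) (hn n hn')
  · obtain ⟨ε, hε, hε'⟩ := aux_B C hC_add hC_smul e he c hc
    obtain ⟨n₀, hn⟩ := eventually_atTop.1 (h.eventually_lt_const hε)
    exact ⟨n₀, fun n hn' => hε' _ (hd_pos _ _) (hn n hn')⟩
  · obtain ⟨c, hc, hc'⟩ := aux_A C hC_add hC_smul e he ε hε
    obtain ⟨n₀, hn⟩ := h c hc
    exact ⟨n₀, fun m hm n hn' => hc' _ (hd_pos _ _) (hn m hm n hn')⟩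
  · obtain ⟨ε, hε, hε'⟩ := aux_B C hC_add hC_smul e he c hc
    obtain ⟨n₀, hn⟩ := h ε hε
    exact ⟨n₀, fun m hm n hn' => hε' _ (hd_pos _ _) (hn m hm n hn')⟩
end
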